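/- arXiv:solv-int/9909002 — 4 statements merged into one kernel-verified Lean document; each statement's English description precedes it below -/
import Mathlib

section
/- Let 0 < γ < 2. If (x_n), n ≥ 0, is a sequence of complex numbers with |x_n| = 1 for all n, satisfying the discrete Painlevé equation (P) with parameter γ for all n ≥ 0 and with x_0 = e^{iγπ/4}, then for every n ≥ 0 one has x_n = e^{iα_n} with α_n ∈ (0, π/2); i.e. the unitary solution starting at e^{iγπ/4} stays in the open arc {e^{iθ} : 0 < θ < π/2} for all n. -/
open Complex

noncomputable section

/-- The discrete Painlevé equation (P) with parameter `γ`: for `n = 0` the second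
term on the left-hand side is absent (its coefficient `n` vanishes); all occurring
denominators are required to be nonzero. -/
def PainleveP (γ : ℂ) (x : ℕ → ℂ) : Prop :=
  ∀ n : ℕ,
    (Complex.I + x n * x (n+1) ≠ 0) ∧
    (n ≠ 0 → Complex.I + x (n-1) * x n ≠ 0) ∧
    ((n : ℂ) + 1) * (x n ^ 2 - 1) * ((x (n+1) - Complex.I * x n) / (Complex.I + x n * x (n+1))) -
      (n : ℂ) * (x n ^ 2 + 1) * ((x (n-1) + Complex.I * x n) / (Complex.I + x (n-1) * x n)) =
    γ * x n

namespace PainleveAux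

open MeasureTheory Set Filter Topology Polynomial

/-- The weight. -/
def wt (c : ℝ) (N : ℕ) (t : ℝ) : ℝ := t ^ (-c) / (1 + t ^ 2) ^ N

/-- The moments of the weight. -/
def mom (c : ℝ) (N k : ℕ) : ℝ := ∫ t in Ioi (0 : ℝ), t ^ k * wt c N t

lemma wt_pos (c : ℝ) (N : ℕ) {t : ℝ} (ht : 0 < t) : 0 < wt c N t := by
  unfold wt; positivity

lemma wt_cont (c : ℝ) (N k : ℕ) : ContinuousOn (fun t : ℝ => t ^ k * wt c N t) (Ioi 0) := by
  unfold wt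
  intro t ht
  have ht' : t ≠ 0 := ne_of_gt ht
  have h2 : (1 + t ^ 2) ^ N ≠ 0 := by positivity
  apply ContinuousAt.continuousWithinAt
  apply ContinuousAt.mul (by fun_prop)
  have hq : ContinuousAt (fun t : ℝ => (1 + t ^ 2) ^ N) t := by fun_prop
  exact ContinuousAt.div (f := fun t : ℝ => t ^ (-c))
    (Real.continuousAt_rpow_const _ _ (Or.inl ht')) hq h2

lemma integrable_mono {c : ℝ} (hc0 : 0 < c) (hc1 : c < 1) {N k : ℕ} (hk : k < 2 * N) :
    IntegrableOn (fun t : ℝ => t ^ k * wt c N t) (Ioi 0) := by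
  have hm : ∀ s : Set ℝ, MeasurableSet s → s ⊆ Ioi 0 →
      AEStronglyMeasurable (fun t : ℝ => t ^ k * wt c N t) (volume.restrict s) := by
    intro s hs hss
    exact ((wt_cont c N k).mono hss).aestronglyMeasurable hs
  rw [← Ioc_union_Ioi_eq_Ioi (zero_le_one' ℝ)]
  apply IntegrableOn.union
  · have h1 : IntegrableOn (fun t : ℝ => t ^ (-c)) (Ioc 0 1) := by
      have := intervalIntegral.intervalIntegrable_rpow' (a := 0) (b := 1) (r := -c) (by linarith)
      rwa [intervalIntegrable_iff_integrableOn_Ioc_of_le zero_le_one] at this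
    refine Integrable.mono' h1 (hm _ measurableSet_Ioc (fun t ht => ht.1)) ?_
    filter_upwards [ae_restrict_mem measurableSet_Ioc] with t ht
    have ht0 : 0 < t := ht.1
    have := wt_pos c N ht0
    rw [Real.norm_of_nonneg (by positivity)]
    have a1 : t ^ k ≤ 1 := pow_le_one₀ ht0.le ht.2
    have a2 : wt c N t ≤ t ^ (-c) := by
      unfold wt
      apply div_le_self (by positivity)
      exact one_le_pow₀ (by nlinarith [sq_nonneg t])
    calc t ^ k * wt c N t ≤ 1 * wt c N t := by gcongr
      _ ≤ _ := by simpa using a2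
  · have h1 : IntegrableOn (fun t : ℝ => t ^ (-1-c)) (Ioi 1) :=
      integrableOn_Ioi_rpow_of_lt (by linarith) one_pos
    refine Integrable.mono' h1 (hm _ measurableSet_Ioi (Ioi_subset_Ioi zero_le_one)) ?_
    filter_upwards [ae_restrict_mem measurableSet_Ioi] with t ht
    have ht1 : 1 < t := ht
    have ht0 : 0 < t := by linarith
    have := wt_pos c N ht0
    rw [Real.norm_of_nonneg (by positivity)]
    have e : t ^ (-1-c) = t⁻¹ * t ^ (-c) := by
      rw [sub_eq_add_neg, Real.rpow_add ht0, Real.rpow_neg_one]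
    rw [e]; unfold wt
    have b : t ^ k * t ≤ (1 + t ^ 2) ^ N := by
      calc t ^ k * t = t ^ (k+1) := by ring
        _ ≤ t ^ (2 * N) := pow_le_pow_right₀ ht1.le (by omega)
        _ = (t ^ 2) ^ N := by rw [pow_mul]
        _ ≤ _ := by gcongr; linarith
    have hp : 0 < t ^ (-c) := by positivity
    rw [mul_div_assoc', div_le_iff₀ (by positivity)]
    calc t ^ k * t ^ (-c) = t⁻¹ * t ^ (-c) * (t ^ k * t) := by field_simp
      _ ≤ _ := by gcongr

lemma mom_rec {c : ℝ} (hc0 : 0 < c) (hc1 : c < 1) {N k : ℕ} (hk : k < 2 * N) :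
    mom c (N+1) (k+2) + mom c (N+1) k = mom c N k := by
  unfold mom
  rw [← integral_add (integrable_mono hc0 hc1 (by omega)) (integrable_mono hc0 hc1 (by omega))]
  apply setIntegral_congr_fun measurableSet_Ioi
  intro t ht
  simp only [wt]
  have h2 : (1 + t ^ 2) ≠ 0 := by positivity
  field_simp
  ring

lemma mom_parts {c : ℝ} (hc0 : 0 < c) (hc1 : c < 1) {N k : ℕ} (hk : k < 2 * N) :
    ((k : ℝ) + 1 - c - 2 * N) * mom c N k + 2 * N * mom c (N+1) k = 0 := by
  have i1 := integrable_mono hc0 hc1 hk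
  have i2 := integrable_mono hc0 hc1 (N := N+1) (k := k) (by omega)
  have key : ∫ t in Ioi (0:ℝ), (((k : ℝ) + 1 - c - 2 * N) * (t ^ k * wt c N t)
      + 2 * N * (t ^ k * wt c (N+1) t)) = 0 - (fun t : ℝ => t ^ (k + 1 - c) / (1 + t ^ 2) ^ N) 0 := by
    refine integral_Ioi_of_hasDerivAt_of_tendsto (f := fun t : ℝ => t ^ (k + 1 - c) / (1 + t ^ 2) ^ N) ?_ ?_ ?_ ?_
    · apply ContinuousAt.continuousWithinAt
      have hq : ContinuousAt (fun t : ℝ => (1 + t ^ 2) ^ N) 0 := by fun_prop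
      refine ContinuousAt.div (f := fun t : ℝ => t ^ ((k:ℝ) + 1 - c)) ?_ hq (by simp)
      apply Real.continuousAt_rpow_const
      right
      have : (0:ℝ) ≤ k := by positivity
      linarith
    · intro t ht
      have ht0 : (0:ℝ) < t := ht
      have h2 : (1 + t ^ 2) ≠ 0 := by positivity
      have d1 := Real.hasDerivAt_rpow_const (x := t) (p := k + 1 - c) (Or.inl ht0.ne')
      have d2 : HasDerivAt (fun t : ℝ => (1 + t ^ 2) ^ N) (N * (1 + t ^ 2) ^ (N-1) * (2 * t)) t := by
        have := (((hasDerivAt_id' t).fun_pow 2).const_add 1).fun_pow N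
        refine this.congr_deriv ?_
        norm_num
      have d3 := d1.fun_div d2 (pow_ne_zero N h2)
      refine d3.congr_deriv ?_
      have e1 : t ^ ((k:ℝ) + 1 - c - 1) = t ^ k * t ^ (-c) := by
        rw [← Real.rpow_natCast, ← Real.rpow_add ht0]; congr 1; ring
      have e2 : t ^ ((k:ℝ) + 1 - c) = t ^ k * t * t ^ (-c) := by
        rw [← pow_succ, ← Real.rpow_natCast, ← Real.rpow_add ht0]; congr 1; push_cast; ring
      rw [e1, e2]
      simp only [wt]
      obtain ⟨M, rfl⟩ : ∃ M, N = M + 1 := ⟨N-1, by omega⟩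
      simp only [Nat.add_sub_cancel]
      push_cast
      field_simp
      ring
    · exact (i1.const_mul _).add (i2.const_mul _)
    · have hlim : Tendsto (fun t : ℝ => t ^ (-c)) atTop (𝓝 0) := tendsto_rpow_neg_atTop hc0
      refine tendsto_of_tendsto_of_tendsto_of_le_of_le' tendsto_const_nhds hlim ?_ ?_
      · filter_upwards [eventually_gt_atTop 0] with t ht
        positivity
      · filter_upwards [eventually_gt_atTop 1] with t ht
        have ht0 : 0 < t := by linarith
        have e2 : t ^ ((k:ℝ) + 1 - c) = t ^ (k+1) * t ^ (-c) := by
          rw [← Real.rpow_natCast, ← Real.rpow_add ht0]; congr 1; push_cast; ring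
        rw [e2, div_le_iff₀ (by positivity), mul_comm]
        gcongr
        calc t ^ (k+1) ≤ t ^ (2 * N) := pow_le_pow_right₀ ht.le (by omega)
          _ = (t ^ 2) ^ N := by rw [pow_mul]
          _ ≤ _ := by gcongr; linarith
  rw [integral_add (i1.const_mul _) (i2.const_mul _), integral_const_mul, integral_const_mul] at key
  simp only [mom]
  rw [key]
  have : (k:ℝ) + 1 - c ≠ 0 := by
    have : (0:ℝ) ≤ k := by positivity
    linarith
  simp [Real.zero_rpow this]

/-- The moment functional. -/
def W (c : ℝ) (N : ℕ) : ℝ[X] →ₗ[ℝ] ℝ :=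
  ∑ k ∈ Finset.range (2 * N), mom c N k • Polynomial.lcoeff ℝ k

lemma W_pow (c : ℝ) {N k : ℕ} (hk : k < 2 * N) : W c N (X ^ k) = mom c N k := by
  unfold W
  simp [Polynomial.coeff_X_pow, hk]

lemma W_ext {φ ψ : ℝ[X] →ₗ[ℝ] ℝ} {m : ℕ} (h : ∀ k < m, φ (X ^ k) = ψ (X ^ k)) {p : ℝ[X]}
    (hp : p.natDegree < m) : φ p = ψ p := by
  rw [p.as_sum_range' m hp, map_sum, map_sum]
  apply Finset.sum_congr rfl
  intro k hk
  rw [← Polynomial.smul_X_eq_monomial, map_smul, map_smul, h k (Finset.mem_range.1 hk)]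

lemma W_rec {c : ℝ} (hc0 : 0 < c) (hc1 : c < 1) {N : ℕ} {p : ℝ[X]} (hp : p.natDegree < 2 * N) :
    W c (N+1) ((X ^ 2 + 1) * p) = W c N p := by
  refine W_ext (φ := (W c (N+1)) ∘ₗ (LinearMap.mulLeft ℝ (X ^ 2 + 1))) (ψ := W c N) ?_ hp
  intro k hk
  have : (X ^ 2 + 1 : ℝ[X]) * X ^ k = X ^ (k+2) + X ^ k := by ring
  simp only [LinearMap.comp_apply, LinearMap.mulLeft_apply]
  rw [this, map_add, W_pow _ (by omega), W_pow _ (by omega), W_pow _ hk, mom_rec hc0 hc1 hk]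

lemma W_parts {c : ℝ} (hc0 : 0 < c) (hc1 : c < 1) {N : ℕ} {p : ℝ[X]} (hp : p.natDegree < 2 * N) :
    W c N (X * derivative p) + (1 - c - 2 * N) * W c N p + 2 * N * W c (N+1) p = 0 := by
  refine W_ext (φ := (W c N) ∘ₗ (LinearMap.mulLeft ℝ X) ∘ₗ derivative + (1 - c - 2 * N : ℝ) • W c N
    + (2 * N : ℝ) • W c (N+1)) (ψ := 0) ?_ hp
  intro k hk
  have e : (X : ℝ[X]) * derivative (X ^ k) = (k : ℝ) • X ^ k := by
    rcases k with _ | k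
    · simp
    · simp [Polynomial.smul_eq_C_mul]; ring
  simp only [LinearMap.add_apply, LinearMap.comp_apply, LinearMap.mulLeft_apply, LinearMap.smul_apply,
    LinearMap.zero_apply, smul_eq_mul]
  rw [e, map_smul, W_pow _ hk, W_pow _ (by omega), smul_eq_mul]
  have := mom_parts hc0 hc1 hk
  linarith

lemma W_integral {c : ℝ} (hc0 : 0 < c) (hc1 : c < 1) {N : ℕ} {p : ℝ[X]} (hp : p.natDegree < 2 * N) :
    IntegrableOn (fun t => p.eval t * wt c N t) (Ioi 0) ∧
    W c N p = ∫ t in Ioi (0:ℝ), p.eval t * wt c N t := by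
  have e : (fun t => p.eval t * wt c N t) =
      fun t => ∑ k ∈ Finset.range (2 * N), p.coeff k * (t ^ k * wt c N t) := by
    funext t
    rw [Polynomial.eval_eq_sum_range' hp, Finset.sum_mul]
    apply Finset.sum_congr rfl; intros; ring
  have hi : ∀ k ∈ Finset.range (2 * N),
      IntegrableOn (fun t => p.coeff k * (t ^ k * wt c N t)) (Ioi 0) := fun k hk =>
    (integrable_mono hc0 hc1 (Finset.mem_range.1 hk)).const_mul _
  rw [e]
  refine ⟨integrable_finsetSum _ hi, ?_⟩
  rw [integral_finsetSum _ hi]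
  unfold W
  simp only [LinearMap.sum_apply, LinearMap.smul_apply, smul_eq_mul, integral_const_mul]
  apply Finset.sum_congr rfl
  intro k hk
  simp [mom, mul_comm]

lemma W_pos {c : ℝ} (hc0 : 0 < c) (hc1 : c < 1) {N : ℕ} {p : ℝ[X]} (hp : p.natDegree < 2 * N)
    (h0 : p ≠ 0) (hpos : ∀ t : ℝ, 0 < t → 0 ≤ p.eval t) : 0 < W c N p := by
  obtain ⟨hi, he⟩ := W_integral hc0 hc1 hp
  rw [he]
  have hnn : 0 ≤ᵐ[volume.restrict (Ioi (0:ℝ))] (fun t => p.eval t * wt c N t) := by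
    filter_upwards [ae_restrict_mem measurableSet_Ioi] with t ht
    exact mul_nonneg (hpos t ht) (wt_pos c N ht).le
  rw [setIntegral_pos_iff_support_of_nonneg_ae hnn hi]
  have hsub : Ioi (0:ℝ) \ {t | p.IsRoot t} ⊆
      Function.support (fun t => p.eval t * wt c N t) ∩ Ioi 0 := by
    intro t ht
    refine ⟨?_, ht.1⟩
    exact mul_ne_zero ht.2 (wt_pos c N ht.1).ne'
  have hfin : volume {t : ℝ | p.IsRoot t} = 0 :=
    (Polynomial.finite_setOfPred_isRoot h0).measure_zero _
  refine lt_of_lt_of_le ?_ (measure_mono hsub)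
  rw [measure_sdiff_null hfin]
  simp

lemma beta_subst {u : ℝ} (hu0 : 0 < u) (hu1 : u < 1) :
    ∫ t in Ioi (0:ℝ), t ^ (2 * u - 1) / (1 + t ^ 2) = Real.pi / (2 * Real.sin (Real.pi * u)) := by
  have hB : (ProbabilityTheory.beta u (1-u)) = Real.pi / Real.sin (Real.pi * u) := by
    unfold ProbabilityTheory.beta
    rw [Real.Gamma_mul_Gamma_one_sub]; simp
  have hI : (ProbabilityTheory.beta u (1-u)) = ∫ x in Ioo (0:ℝ) 1, x ^ (u-1) * (1-x) ^ (-u) := by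
    rw [ProbabilityTheory.beta_eq_betaIntegralReal u (1-u) hu0 (by linarith), Complex.betaIntegral,
      intervalIntegral.integral_of_le zero_le_one, integral_Ioc_eq_integral_Ioo]
    rw [← Complex.ofReal_re (∫ x in Ioo (0:ℝ) 1, x ^ (u-1) * (1-x) ^ (-u)), ← integral_complex_ofReal]
    congr 1
    apply setIntegral_congr_fun measurableSet_Ioo
    intro x hx
    simp only
    rw [Complex.ofReal_mul, Complex.ofReal_cpow hx.1.le, Complex.ofReal_cpow (by linarith [hx.2])]
    push_cast
    congr 2
    ring
  have himg : (fun t : ℝ => t ^ 2 / (1 + t ^ 2)) '' Ioi 0 = Ioo 0 1 := by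
    ext y
    constructor
    · rintro ⟨t, ht, rfl⟩
      have ht0 : (0:ℝ) < t := ht
      refine ⟨by positivity, ?_⟩
      rw [div_lt_one (by positivity)]; linarith
    · rintro ⟨h0, h1⟩
      have h1' : 0 < 1 - y := by linarith
      refine ⟨Real.sqrt (y / (1-y)), Real.sqrt_pos.2 (by positivity), ?_⟩
      simp only
      rw [Real.sq_sqrt (by positivity)]
      field_simp
      ring
  have hinj : InjOn (fun t : ℝ => t ^ 2 / (1 + t ^ 2)) (Ioi 0) := by
    intro s hs t ht h
    have hs0 : (0:ℝ) < s := hs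
    have ht0 : (0:ℝ) < t := ht
    simp only at h
    rw [div_eq_div_iff (by positivity) (by positivity)] at h
    have : s ^ 2 = t ^ 2 := by linarith
    exact (pow_left_inj₀ hs0.le ht0.le two_ne_zero).1 this
  have hd : ∀ t ∈ Ioi (0:ℝ), HasDerivWithinAt (fun t : ℝ => t ^ 2 / (1 + t ^ 2))
      (2 * t / (1 + t ^ 2) ^ 2) (Ioi 0) t := by
    intro t ht
    have h2 : (1 + t ^ 2) ≠ 0 := by positivity
    have d1 : HasDerivAt (fun t : ℝ => t ^ 2) (2 * t) t := by
      simpa using (hasDerivAt_id' t).fun_pow 2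
    have := d1.fun_div (d1.const_add 1) h2
    apply HasDerivAt.hasDerivWithinAt
    refine this.congr_deriv ?_
    congr 1; ring
  have hcv := integral_image_eq_integral_abs_deriv_smul measurableSet_Ioi hd hinj
    (fun x => x ^ (u-1) * (1-x) ^ (-u))
  rw [himg, ← hI, hB] at hcv
  have : ∫ t in Ioi (0:ℝ), |2 * t / (1 + t ^ 2) ^ 2| • ((t ^ 2 / (1 + t ^ 2)) ^ (u - 1) *
      (1 - t ^ 2 / (1 + t ^ 2)) ^ (-u)) = ∫ t in Ioi (0:ℝ), 2 * (t ^ (2 * u - 1) / (1 + t ^ 2)) := by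
    apply setIntegral_congr_fun measurableSet_Ioi
    intro t ht
    have ht0 : (0:ℝ) < t := ht
    simp only
    have e0 : (1 - t ^ 2 / (1 + t ^ 2)) = (1 + t ^ 2)⁻¹ := by field_simp; ring
    have e1 : (t ^ 2) ^ (u-1) = t ^ (2 * u - 1) / t := by
      rw [← Real.rpow_natCast, ← Real.rpow_mul ht0.le, eq_div_iff ht0.ne']
      nth_rewrite 2 [← Real.rpow_one t]
      rw [← Real.rpow_add ht0]; congr 1; push_cast; ring
    have h2 : 0 < 1 + t ^ 2 := by positivity
    have e2 : (1 + t ^ 2) ^ u = (1 + t ^ 2) ^ (u-1) * (1 + t ^ 2) := by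
      nth_rewrite 3 [← Real.rpow_one (1 + t ^ 2)]
      rw [← Real.rpow_add h2]; congr 1; ring
    rw [abs_of_pos (by positivity), e0, Real.div_rpow (by positivity) h2.le, e1,
      Real.inv_rpow h2.le, Real.rpow_neg h2.le, inv_inv, e2]
    have : (1 + t ^ 2) ^ (u - 1) ≠ 0 := by positivity
    simp only [smul_eq_mul]
    field_simp
  rw [this, integral_const_mul] at hcv
  rw [mul_comm (2:ℝ) (Real.sin _), ← div_div, hcv]; ring

lemma base_moments {c : ℝ} (hc0 : 0 < c) (hc1 : c < 1) :
    Real.cos (Real.pi * c / 2) * mom c 1 0 = Real.sin (Real.pi * c / 2) * mom c 1 1 := by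
  have h0 : mom c 1 0 = Real.pi / (2 * Real.cos (Real.pi * c / 2)) := by
    have := beta_subst (u := (1-c)/2) (by linarith) (by linarith)
    rw [show Real.pi * ((1-c)/2) = Real.pi/2 - Real.pi * c/2 by ring, Real.sin_pi_div_two_sub] at this
    rw [← this, mom]
    apply setIntegral_congr_fun measurableSet_Ioi
    intro t ht
    simp only [wt, pow_zero, one_mul, pow_one]
    congr 2; ring
  have h1 : mom c 1 1 = Real.pi / (2 * Real.sin (Real.pi * c / 2)) := by
    have := beta_subst (u := 1-c/2) (by linarith) (by linarith)
    rw [show Real.pi * (1-c/2) = Real.pi - Real.pi * c/2 by ring, Real.sin_pi_sub] at this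
    rw [← this, mom]
    apply setIntegral_congr_fun measurableSet_Ioi
    intro t ht
    have ht0 : (0:ℝ) < t := ht
    simp only [wt, pow_one]
    rw [mul_div_assoc']
    congr 1
    nth_rewrite 1 [← Real.rpow_one t]
    rw [← Real.rpow_add ht0]; congr 1; ring
  have hpi := Real.pi_pos
  have a0 : 0 < Real.cos (Real.pi * c / 2) := by
    apply Real.cos_pos_of_mem_Ioo; constructor <;> nlinarith
  have a1 : 0 < Real.sin (Real.pi * c / 2) := by
    apply Real.sin_pos_of_pos_of_lt_pi <;> nlinarith
  rw [h0, h1]; field_simp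


lemma red {φ : ℝ[X] →ₗ[ℝ] ℝ} {m : ℕ} (h : ∀ g : ℝ[X], g.natDegree + 2 ≤ m → φ ((X ^ 2 + 1) * g) = 0)
    {g : ℝ[X]} (hg : g.natDegree ≤ m) :
    φ g = (aeval Complex.I g).re * φ 1 + (aeval Complex.I g).im * φ X := by
  have hq : (X ^ 2 + 1 : ℝ[X]).Monic := by
    have := Polynomial.monic_X_pow_add_C (1:ℝ) (two_ne_zero)
    simpa using this
  have hqd : (X ^ 2 + 1 : ℝ[X]).natDegree = 2 := by
    have := Polynomial.natDegree_X_pow_add_C (n := 2) (r := (1:ℝ))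
    simpa using this
  have hr : (g %ₘ (X ^ 2 + 1)).natDegree ≤ 1 := by
    have := Polynomial.natDegree_modByMonic_lt g hq (by
      intro h1; rw [h1] at hqd; simp at hqd)
    omega
  have he := Polynomial.modByMonic_add_div g (X ^ 2 + 1)
  have hz : φ ((X ^ 2 + 1) * (g /ₘ (X ^ 2 + 1))) = 0 := by
    by_cases h2 : g.natDegree < 2
    · have : g /ₘ (X ^ 2 + 1) = 0 := by
        rw [Polynomial.divByMonic_eq_zero_iff hq]
        apply Polynomial.degree_lt_degree; omega
      rw [this]; simp
    · apply h
      rw [Polynomial.natDegree_divByMonic _ hq, hqd]; omega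
  set r := g %ₘ (X ^ 2 + 1) with hrdef
  set d := g /ₘ (X ^ 2 + 1)
  have hre := Polynomial.eq_X_add_C_of_natDegree_le_one hr
  have e1 : φ g = r.coeff 0 * φ 1 + r.coeff 1 * φ X := by
    rw [← he, map_add, hz]
    conv_lhs => rw [hre]
    rw [map_add, ← smul_eq_C_mul, ← mul_one (C (r.coeff 0)), ← smul_eq_C_mul, map_smul, map_smul]
    simp; ring
  have e2 : aeval Complex.I g = (r.coeff 0 : ℂ) + (r.coeff 1 : ℂ) * Complex.I := by
    rw [← he, map_add, map_mul]
    conv_lhs => rw [hre]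
    simp; ring
  rw [e1, e2]; simp

lemma lead {φ : ℝ[X] →ₗ[ℝ] ℝ} {m : ℕ} (h : ∀ g : ℝ[X], g.natDegree < m → φ g = 0)
    {g : ℝ[X]} (hg : g.natDegree ≤ m) : φ g = g.coeff m * φ (X ^ m) := by
  refine W_ext (φ := φ) (ψ := (φ (X ^ m)) • Polynomial.lcoeff ℝ m) (m := m + 1) ?_ (by omega) |>.trans ?_
  · intro k hk
    by_cases hkm : k = m
    · subst hkm; simp
    · rw [h _ (by simp; omega)]
      simp [Polynomial.coeff_X_pow, Ne.symm hkm]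
  · simp [mul_comm]

lemma cplx {j k A x y : ℂ} {D : ℝ} (hx : x * (starRingEnd ℂ) x = 1) (hx0 : 0 < x.re)
    (hA : A ≠ 0) (h1 : (starRingEnd ℂ) k * A = -I * j * (starRingEnd ℂ) (x * A))
    (h2 : ((starRingEnd ℂ) k * (x * A)).re = D * ((starRingEnd ℂ) j * (x * A)).re)
    (h3 : 0 < ((starRingEnd ℂ) k * (x * A)).re) (h4 : 0 < ((starRingEnd ℂ) j * A).re)
    (hy : y * (I - D * x) = I * D - x) :
    k = y * j ∧ 0 < y.re * x.re + y.im * x.im := by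
  set Q := (starRingEnd ℂ) j * A with hQ
  have hQc : (starRingEnd ℂ) Q = j * (starRingEnd ℂ) A := by simp [hQ]
  have h1c : k * (starRingEnd ℂ) A = I * x * Q := by
    have := congrArg (starRingEnd ℂ) h1
    simp only [map_mul, map_neg, Complex.conj_conj, Complex.conj_I] at this
    rw [this, hQ]; ring
  have h5 : (starRingEnd ℂ) k * (x * A) = -I * (starRingEnd ℂ) Q := by
    rw [hQc]
    have : (starRingEnd ℂ) k * (x * A) = x * ((starRingEnd ℂ) k * A) := by ring
    rw [this, h1, map_mul]
    linear_combination (-I * j * (starRingEnd ℂ) A) * hx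
  have hk : (-I * (starRingEnd ℂ) Q).re = -Q.im := by simp
  rw [h5, hk] at h3
  rw [h5, hk] at h2
  have h6 : (starRingEnd ℂ) j * (x * A) = x * Q := by rw [hQ]; ring
  rw [h6] at h2
  have h7 : I * (Q - (starRingEnd ℂ) Q) = D * (x * Q + (starRingEnd ℂ) x * (starRingEnd ℂ) Q) := by
    have e1 := Complex.sub_conj Q
    have e2 := Complex.add_conj (x * Q)
    rw [map_mul] at e2
    rw [e1, e2]
    have h2' : (-Q.im : ℂ) = D * ((x * Q).re : ℂ) := by exact_mod_cast h2
    push_cast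
    linear_combination (2 * (Q.im:ℂ)) * I_mul_I + 2 * h2'
  have hne : I - D * x ≠ 0 := by
    intro h
    have hr := congrArg Complex.re h
    simp at hr
    rcases hr with hr | hr
    · rw [hr] at h; simp at h
    · exact hx0.ne' hr
  have hAc : (starRingEnd ℂ) A ≠ 0 := by simpa using hA
  have hkj : k = y * j := by
    apply mul_right_cancel₀ (mul_ne_zero hAc hne)
    have L : k * ((starRingEnd ℂ) A * (I - D * x)) = I * x * Q * (I - D * x) := by
      rw [← mul_assoc, h1c]
    have R : y * j * ((starRingEnd ℂ) A * (I - D * x)) = (I * D - x) * (starRingEnd ℂ) Q := by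
      rw [hQc, ← hy]; ring
    rw [L, R]
    linear_combination (I * x) * h7 + (D * I * (starRingEnd ℂ) Q) * hx + (x * (starRingEnd ℂ) Q) * I_mul_I
  refine ⟨hkj, ?_⟩
  have h8 : y * (starRingEnd ℂ) Q = I * x * Q := by
    rw [hQc, ← h1c, hkj]; ring
  have h9 : (y * (starRingEnd ℂ) x) * (starRingEnd ℂ) Q = I * Q := by
    linear_combination ((starRingEnd ℂ) x) * h8 + (I * Q) * hx
  have h10 : (y * (starRingEnd ℂ) x) * ((starRingEnd ℂ) Q * Q) = I * Q * Q := by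
    rw [← mul_assoc, h9]
  have h11 := congrArg Complex.re h10
  rw [mul_comm ((starRingEnd ℂ) Q) Q, Complex.mul_conj] at h11
  have h12 : (y * (starRingEnd ℂ) x).re = y.re * x.re + y.im * x.im := by simp
  rw [Complex.re_mul_ofReal, h12] at h11
  simp at h11
  have hn : 0 < normSq Q := by
    rw [Complex.normSq_pos]; intro h; rw [h] at h4; simp at h4
  by_contra hcon
  push Not at hcon
  nlinarith

lemma step {c : ℝ} (hc0 : 0 < c) (hc1 : c < 1) {N : ℕ} (hN : 1 ≤ N) {A B : ℝ[X]}
    (hA : A.natDegree ≤ N) (hB : B.natDegree + 1 ≤ N)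
    (oA : ∀ g : ℝ[X], g.natDegree < N → W c N (A * g) = 0)
    (oB : ∀ g : ℝ[X], g.natDegree + 1 < N → W c N (X * B * g) = 0)
    (hA0 : A ≠ 0) (hB0 : B ≠ 0) {x y : ℂ} (hx : x * (starRingEnd ℂ) x = 1) (hx0 : 0 < x.re)
    (hi : aeval I B = x * aeval I A) {D : ℝ} (hD : N * A.coeff N * D = - c * B.coeff (N-1))
    (hy : y * (I - D * x) = I * D - x) (hyn : y.re ^ 2 + y.im ^ 2 = 1) :
    (∀ g : ℝ[X], g.natDegree < N + 1 → W c (N+1) (((C y.re - C y.im * X) * A - X * B) * g) = 0) ∧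
    (∀ g : ℝ[X], g.natDegree + 1 < N + 1 →
      W c (N+1) (X * (A + (C y.im - C y.re * X) * B) * g) = 0) ∧
    0 < y.re * x.re + y.im * x.im := by
  let J : ℝ[X] →ₗ[ℝ] ℝ := W c (N+1) ∘ₗ LinearMap.mulLeft ℝ A
  let K : ℝ[X] →ₗ[ℝ] ℝ := W c (N+1) ∘ₗ LinearMap.mulLeft ℝ (X * B)
  let K' : ℝ[X] →ₗ[ℝ] ℝ := W c N ∘ₗ LinearMap.mulLeft ℝ (X * B)
  have hJ : ∀ g, J g = W c (N+1) (A * g) := fun g => rfl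
  have hK : ∀ g, K g = W c (N+1) (X * B * g) := fun g => rfl
  have hK' : ∀ g, K' g = W c N (X * B * g) := fun g => rfl
  have dm : ∀ p q : ℝ[X], (p * q).natDegree ≤ p.natDegree + q.natDegree :=
    fun p q => Polynomial.natDegree_mul_le
  have dX : (X : ℝ[X]).natDegree = 1 := Polynomial.natDegree_X
  have dXB : (X * B).natDegree ≤ N := by have := dm X B; omega
  have redJ : ∀ g : ℝ[X], g.natDegree ≤ N + 1 →
      J g = (aeval I g).re * J 1 + (aeval I g).im * J X := by
    intro g hg
    refine red (m := N+1) ?_ hg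
    intro h hh
    rw [hJ, show A * ((X ^ 2 + 1) * h) = (X ^ 2 + 1) * (A * h) by ring,
      W_rec hc0 hc1 (by have := dm A h; omega)]
    exact oA h (by omega)
  have redK : ∀ g : ℝ[X], g.natDegree ≤ N →
      K g = (aeval I g).re * K 1 + (aeval I g).im * K X := by
    intro g hg
    refine red (m := N) ?_ hg
    intro h hh
    rw [hK, show X * B * ((X ^ 2 + 1) * h) = (X ^ 2 + 1) * (X * B * h) by ring,
      W_rec hc0 hc1 (by have := dm (X * B) h; omega)]
    exact oB h (by omega)
  set Z := K' (X ^ (N-1)) with hZ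
  have leadK : ∀ g : ℝ[X], g.natDegree + 1 ≤ N → W c N (X * B * g) = g.coeff (N-1) * Z := by
    intro g hg
    rw [← hK']
    refine lead (m := N-1) ?_ (by omega)
    intro h hh
    exact oB h (by omega)
  have dder : ∀ p : ℝ[X], (derivative p).natDegree ≤ p.natDegree - 1 :=
    fun p => Polynomial.natDegree_derivative_le p
  have dXder : ∀ p : ℝ[X], (X * derivative p).natDegree ≤ p.natDegree := by
    intro p
    by_cases h : p.natDegree = 0
    · rw [Polynomial.eq_C_of_natDegree_eq_zero h]; simp
    · have := dm X (derivative p); have := dder p; omega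
  have cXder : ∀ (p : ℝ[X]) (n : ℕ), (X * derivative p).coeff n = n * p.coeff n := by
    intro p n
    rcases n with _ | n
    · simp
    · rw [Polynomial.coeff_X_mul, Polynomial.coeff_derivative]; push_cast; ring
  -- K(B)
  have fK : 2 * N * K B = c * B.coeff (N-1) * Z := by
    have dG : (X * B * B).natDegree < 2 * N := by have := dm (X * B) B; omega
    have hp := W_parts hc0 hc1 dG
    have e : X * derivative (X * B * B) = X * B * B + (2:ℝ) • (X * B * (X * derivative B)) := by
      simp only [derivative_mul, derivative_X, smul_eq_C_mul]
      rw [show (C (2:ℝ) : ℝ[X]) = 2 from map_ofNat C 2]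
      ring
    rw [e, map_add, map_smul, leadK B hB, leadK (X * derivative B) (by have := dXder B; omega),
      cXder, ← hK] at hp
    have : ((N - 1 : ℕ) : ℝ) = N - 1 := by push_cast [hN]; ring
    rw [this, smul_eq_mul] at hp
    linarith
  have fJ : 2 * J B = - A.coeff N * Z := by
    have dG : (A * B).natDegree < 2 * N := by have := dm A B; omega
    have hp := W_parts hc0 hc1 dG
    have e : X * derivative (A * B) = X * B * derivative A + A * (X * derivative B) := by
      simp only [derivative_mul]; ring
    rw [e, map_add, leadK _ (by have := dder A; omega), oA _ (by have := dXder B; omega),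
      oA _ (by omega), ← hJ] at hp
    have h1 : (derivative A).coeff (N-1) = N * A.coeff N := by
      have := cXder A N
      obtain ⟨M, rfl⟩ : ∃ M, N = M + 1 := ⟨N-1, by omega⟩
      rwa [Polynomial.coeff_X_mul] at this
    rw [h1] at hp
    have hN0 : (N:ℝ) ≠ 0 := by positivity
    apply mul_left_cancel₀ hN0
    linarith
  have hBI : aeval I B = x * aeval I A := hi
  have fKA : K A = J (X * B) := by rw [hK, hJ]; congr 1; ring
  rw [redK A hA, redJ (X * B) (by omega)] at fKA
  have fKXA : (aeval I (X * A)).re * K 1 + (aeval I (X * A)).im * K X = J B := by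
    have g1 : K (X * A) = - J B := by
      have : K (X * A) = J (X * (X * B)) := by rw [hK, hJ]; congr 1; ring
      rw [this, redJ (X * (X * B)) (by have := dm X (X * B); omega), redJ B (by omega)]
      have : aeval I (X * (X * B)) = - aeval I B := by
        simp only [map_mul, aeval_X]; linear_combination (aeval I B) * I_mul_I
      rw [this]; simp; ring
    set g' := X * A - (X ^ 2 + 1) * (C (A.coeff N) * X ^ (N-1)) with hg'
    have dg' : g'.natDegree ≤ N := by
      rw [Polynomial.natDegree_le_iff_coeff_eq_zero]
      intro m hm
      rw [hg']
      have e : (X ^ 2 + 1) * (C (A.coeff N) * X ^ (N-1)) =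
        C (A.coeff N) * X ^ (N+1) + C (A.coeff N) * X ^ (N-1) := by
        obtain ⟨M, rfl⟩ : ∃ M, N = M + 1 := ⟨N-1, by omega⟩
        simp only [Nat.add_sub_cancel]; ring
      obtain ⟨m, rfl⟩ : ∃ k, m = k + 1 := ⟨m-1, by omega⟩
      rw [e, coeff_sub, coeff_X_mul, coeff_add, coeff_C_mul_X_pow, coeff_C_mul_X_pow]
      rw [if_neg (show ¬ (m + 1 = N - 1) by omega)]
      by_cases hmN : m = N
      · subst hmN; simp
      · rw [if_neg (by omega), Polynomial.coeff_eq_zero_of_natDegree_lt (by omega)]; simp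
    have eg' : aeval I g' = aeval I (X * A) := by
      rw [hg']; simp
    have g2 : K (X * A) = A.coeff N * Z + K g' := by
      have : X * A = (X ^ 2 + 1) * (C (A.coeff N) * X ^ (N-1)) + g' := by rw [hg']; ring
      rw [this, map_add, hK, show X * B * ((X ^ 2 + 1) * (C (A.coeff N) * X ^ (N-1))) =
        (A.coeff N) • ((X ^ 2 + 1) * (X * B * X ^ (N-1))) by rw [smul_eq_C_mul]; ring, map_smul,
        W_rec hc0 hc1 (by have := dm (X * B) (X ^ (N-1)); simp at this; omega), smul_eq_mul]
      rw [hZ, hK']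
    rw [redK g' dg', eg'] at g2
    linarith
  have fD : K B = D * J B := by
    have hN0 : (N:ℝ) ≠ 0 := by positivity
    have : 2 * (N:ℝ) * K B = 2 * N * (D * J B) := by
      rw [fK]; linear_combination (-N * D) * fJ + Z * hD
    exact mul_left_cancel₀ (by positivity) this
  have posJ : 0 < J A := by
    rw [hJ]
    apply W_pos hc0 hc1 (by have := dm A A; omega) (mul_ne_zero hA0 hA0)
    intro t ht; rw [eval_mul]; exact mul_self_nonneg _
  have posK : 0 < K B := by
    rw [hK]
    apply W_pos hc0 hc1 (by have := dm (X * B) B; omega)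
      (mul_ne_zero (mul_ne_zero Polynomial.X_ne_zero hB0) hB0)
    intro t ht; rw [eval_mul, eval_mul, eval_X, mul_assoc]
    exact mul_nonneg ht.le (mul_self_nonneg _)
  rw [redJ A (by omega)] at posJ
  rw [redK B (by omega)] at posK fD
  rw [redJ B (by omega)] at fD fKXA
  obtain ⟨key, hfin⟩ := cplx (j := ⟨J 1, J X⟩) (k := ⟨K 1, K X⟩) (A := aeval I A) (x := x) (y := y)
    (D := D) hx hx0
    (by intro h; rw [h] at posJ; simp at posJ)
    (by
      rw [map_mul, aeval_X, hBI] at fKA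
      rw [map_mul, aeval_X, hBI] at fKXA
      apply Complex.ext
      · simp at fKA fKXA ⊢; linarith
      · simp at fKA fKXA ⊢; linarith)
    (by rw [hBI] at fD; simp at fD ⊢; linarith)
    (by rw [hBI] at posK; simp at posK ⊢; linarith)
    (by simp at posJ ⊢; linarith) hy
  have k1 : K 1 = y.re * J 1 - y.im * J X := by simpa using congrArg Complex.re key
  have k2 : K X = y.re * J X + y.im * J 1 := by simpa using congrArg Complex.im key
  refine ⟨?_, ?_, hfin⟩
  · intro g hg
    have e : ((C y.re - C y.im * X) * A - X * B) * g =
      y.re • (A * g) - y.im • (A * (X * g)) - X * B * g := by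
      simp only [smul_eq_C_mul]; ring
    rw [e, map_sub, map_sub, map_smul, map_smul, ← hJ, ← hJ, ← hK, redK g (by omega),
      redJ g (by omega), redJ (X * g) (by have := dm X g; omega), k1, k2]
    simp; ring
  · intro g hg
    have e : X * (A + (C y.im - C y.re * X) * B) * g =
      A * (X * g) + y.im • (X * B * g) - y.re • (X * B * (X * g)) := by
      simp only [smul_eq_C_mul]; ring
    rw [e, map_sub, map_add, map_smul, map_smul, ← hJ, ← hK, ← hK, redK g (by omega),
      redK (X * g) (by have := dm X g; omega), redJ (X * g) (by have := dm X g; omega), k1, k2]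
    simp
    linear_combination ((aeval I g).im * J 1 - (aeval I g).re * J X) * hyn

lemma noroot {c : ℝ} (hc0 : 0 < c) (hc1 : c < 1) {M : ℕ} {A : ℝ[X]}
    (hA : A.natDegree ≤ M) (oA : ∀ g : ℝ[X], g.natDegree < M → W c M (A * g) = 0)
    (hA0 : A ≠ 0) {ξ : ℝ} (hξ : ξ ≤ 0) : A.eval ξ ≠ 0 := by
  intro h
  obtain ⟨B, rfl⟩ := Polynomial.dvd_iff_isRoot.2 h
  have hB : B ≠ 0 := right_ne_zero_of_mul hA0
  have hd : ((X - C ξ) * B).natDegree = 1 + B.natDegree := by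
    rw [Polynomial.natDegree_mul (Polynomial.X_sub_C_ne_zero ξ) hB, Polynomial.natDegree_X_sub_C]
  have := oA B (by omega)
  have hp : 0 < W c M ((X - C ξ) * B * B) := by
    apply W_pos hc0 hc1 _ (mul_ne_zero hA0 hB)
    · intro t ht
      rw [eval_mul, eval_mul, mul_assoc]
      apply mul_nonneg _ (mul_self_nonneg _)
      simp; linarith
    · have := Polynomial.natDegree_mul_le (p := (X - C ξ) * B) (q := B); omega
  linarith


lemma uv {c : ℝ} (hc0 : 0 < c) (hc1 : c < 1) {N : ℕ} {A B : ℝ[X]} {a b u v : ℝ}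
    (hA : A.natDegree ≤ N) (hB : B.natDegree + 1 ≤ N)
    (pA : ∀ t : ℝ, 0 ≤ t → 0 < A.eval (-t)) (pB : ∀ t : ℝ, 0 ≤ t → 0 ≤ B.eval (-t))
    {K : ℝ} (hK : ∀ t : ℝ, 1 ≤ t → t * B.eval (-t) ≤ K * A.eval (-t))
    (ha : 0 < a) (hb : 0 < b) (hab : 0 < u * a + v * b)
    (hd : ((C u - C v * X) * A - X * B).natDegree ≤ N + 1)
    (o : ∀ g : ℝ[X], g.natDegree < N + 1 → W c (N+1) (((C u - C v * X) * A - X * B) * g) = 0)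
    (hne : (C u - C v * X) * A - X * B ≠ 0) : 0 < u ∧ 0 < v := by
  set P := (C u - C v * X) * A - X * B with hP
  have nr : ∀ t : ℝ, 0 ≤ t → P.eval (-t) ≠ 0 := fun t ht =>
    noroot hc0 hc1 hd o hne (by linarith)
  have ev : ∀ t : ℝ, P.eval (-t) = (u + t * v) * A.eval (-t) + t * B.eval (-t) := by
    intro t; rw [hP]; simp only [eval_mul, eval_sub, eval_C, eval_X]; ring
  have hcont : Continuous (fun t : ℝ => P.eval (-t)) := by fun_prop
  have hu : 0 < u := by
    by_contra hu
    push Not at hu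
    have hv : 0 < v := by
      by_contra hv
      push Not at hv
      nlinarith
    have h0 : P.eval (-0) ≤ 0 := by
      rw [ev 0]; have := pA 0 le_rfl
      nlinarith
    set s := (1 - u) / v with hs
    have hs0 : 0 ≤ s := by rw [hs]; apply div_nonneg <;> linarith
    have h1 : 0 ≤ P.eval (-s) := by
      rw [ev s]
      have : s * v = 1 - u := by rw [hs]; field_simp
      rw [this]
      have := pA s hs0
      have := mul_nonneg hs0 (pB s hs0)
      nlinarith
    obtain ⟨t, ht, ht'⟩ := intermediate_value_Icc hs0 hcont.continuousOn ⟨h0, h1⟩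
    exact nr t ht.1 ht'
  refine ⟨hu, ?_⟩
  by_contra hv
  push Not at hv
  rcases hv.eq_or_lt with hv | hv
  · have hdN : P.natDegree ≤ N := by
      rw [hP, hv]
      refine (Polynomial.natDegree_sub_le_of_le (m := N) (n := N) ?_ ?_).trans (max_self _).le
      · simp only [map_zero, zero_mul, sub_zero]
        exact (Polynomial.natDegree_C_mul_le _ _).trans hA
      · exact Polynomial.natDegree_mul_le.trans (by rw [Polynomial.natDegree_X]; omega)
    have := o P (by omega)
    have h2 : 0 < W c (N+1) (P * P) := by
      apply W_pos hc0 hc1 _ (mul_ne_zero hne hne)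
      · intro t ht; rw [eval_mul]; exact mul_self_nonneg _
      · have := Polynomial.natDegree_mul_le (p := P) (q := P); omega
    linarith
  · set s := max 1 ((u + K) / (-v)) with hs
    have hs1 : 1 ≤ s := le_max_left _ _
    have hs2 : (u + K) / (-v) ≤ s := le_max_right _ _
    rw [div_le_iff₀ (by linarith)] at hs2
    have hs0 : 0 ≤ s := by linarith
    have h0 : 0 ≤ P.eval (-0) := by
      rw [ev 0]; have := pA 0 le_rfl
      nlinarith
    have h1 : P.eval (-s) ≤ 0 := by
      rw [ev s]
      have := pA s hs0
      have := hK s hs1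
      nlinarith
    obtain ⟨t, ht, ht'⟩ := intermediate_value_Icc' hs0 hcont.continuousOn ⟨h1, h0⟩
    exact nr t ht.1 ht'

/-- The two polynomial sequences. -/
def PQ (x : ℕ → ℂ) : ℕ → ℝ[X] × ℝ[X]
  | 0 => (1, 0)
  | n + 1 => ((C (x n).re - C (x n).im * X) * (PQ x n).1 - X * (PQ x n).2,
      (PQ x n).1 + (C (x n).im - C (x n).re * X) * (PQ x n).2)

lemma PQ1 (x : ℕ → ℂ) (n : ℕ) : (PQ x (n+1)).1 =
    (C (x n).re - C (x n).im * X) * (PQ x n).1 - X * (PQ x n).2 := rfl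

lemma PQ2 (x : ℕ → ℂ) (n : ℕ) : (PQ x (n+1)).2 =
    (PQ x n).1 + (C (x n).im - C (x n).re * X) * (PQ x n).2 := rfl

lemma PQdeg (x : ℕ → ℂ) (n : ℕ) :
    (PQ x (n+1)).1.natDegree ≤ n + 1 ∧ (PQ x (n+1)).2.natDegree ≤ n := by
  have l1 : ∀ u v : ℝ, (C u - C v * X : ℝ[X]).natDegree ≤ 1 := by
    intro u v; compute_degree
  induction n with
  | zero =>
    rw [PQ1, PQ2]; simp only [PQ]
    constructor
    · simp only [mul_one, mul_zero, sub_zero]; exact l1 _ _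
    · simp
  | succ n ih =>
    rw [PQ1 x (n+1), PQ2 x (n+1)]
    constructor
    · refine (Polynomial.natDegree_sub_le_of_le (m := (n+1+1)) (n := (n+1+1)) ?_ ?_).trans (max_self _).le
      · exact (Polynomial.natDegree_mul_le_of_le (l1 _ _) ih.1).trans (by omega)
      · exact (Polynomial.natDegree_mul_le_of_le Polynomial.natDegree_X_le ih.2).trans (by omega)
    · apply Polynomial.natDegree_add_le_of_degree_le
      · exact ih.1
      · exact (Polynomial.natDegree_mul_le_of_le (l1 _ _) ih.2).trans (by omega)

lemma PQlead (x : ℕ → ℂ) (n : ℕ) :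
    (PQ x (n+2)).1.coeff (n+2) = - (x (n+1)).im * (PQ x (n+1)).1.coeff (n+1) ∧
    (PQ x (n+2)).2.coeff (n+1) = (PQ x (n+1)).1.coeff (n+1)
      - (x (n+1)).re * (PQ x (n+1)).2.coeff n := by
  obtain ⟨d1, d2⟩ := PQdeg x n
  have z1 : (PQ x (n+1)).1.coeff (n+2) = 0 := coeff_eq_zero_of_natDegree_lt (by omega)
  have z2 : (PQ x (n+1)).2.coeff (n+1) = 0 := coeff_eq_zero_of_natDegree_lt (by omega)
  have e : ∀ (u v : ℝ) (p : ℝ[X]), (C u - C v * X) * p = C u * p - X * (C v * p) := by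
    intros; ring
  rw [PQ1 x (n+1), PQ2 x (n+1), e, e]
  simp only [coeff_sub, coeff_add, coeff_X_mul, coeff_C_mul, z1, z2]
  constructor <;> ring

lemma PQI (x : ℕ → ℂ) (n : ℕ) (h : x n * (starRingEnd ℂ) (x n) = 1) :
    aeval I (PQ x (n+1)).2 = x n * aeval I (PQ x (n+1)).1 := by
  have e1 : (((x n).re : ℂ) - (x n).im * I) = (starRingEnd ℂ) (x n) := by
    apply Complex.ext <;> simp
  have e2 : (((x n).im : ℂ) - (x n).re * I) = -I * x n := by
    apply Complex.ext <;> simp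
  rw [PQ1, PQ2]
  simp only [map_add, map_sub, map_mul, aeval_X, aeval_C, Complex.coe_algebraMap, e1, e2]
  linear_combination (-(aeval I (PQ x n).1)) * h

lemma PQpos (x : ℕ → ℂ) (n : ℕ) (h : ∀ k < n, 0 < (x k).re ∧ 0 < (x k).im) :
    (∀ t : ℝ, 0 ≤ t → 0 < (PQ x n).1.eval (-t) ∧ 0 ≤ (PQ x n).2.eval (-t)) ∧
    ∃ K : ℝ, ∀ t : ℝ, 1 ≤ t → t * (PQ x n).2.eval (-t) ≤ K * (PQ x n).1.eval (-t) := by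
  induction n with
  | zero => simp only [PQ]; exact ⟨by simp, 0, by simp⟩
  | succ n ih =>
    obtain ⟨p, K, hK⟩ := ih (fun k hk => h k (by omega))
    obtain ⟨ha, hb⟩ := h n (by omega)
    set a := (x n).re
    set b := (x n).im
    have ev1 : ∀ t : ℝ, (PQ x (n+1)).1.eval (-t) =
        (a + t * b) * (PQ x n).1.eval (-t) + t * (PQ x n).2.eval (-t) := by
      intro t; rw [PQ1]; simp only [eval_mul, eval_sub, eval_C, eval_X]; ring
    have ev2 : ∀ t : ℝ, (PQ x (n+1)).2.eval (-t) =
        (PQ x n).1.eval (-t) + (b + t * a) * (PQ x n).2.eval (-t) := by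
      intro t; rw [PQ2]; simp only [eval_mul, eval_sub, eval_add, eval_C, eval_X]; ring
    constructor
    · intro t ht
      obtain ⟨p1, p2⟩ := p t ht
      rw [ev1, ev2]
      constructor <;> positivity
    · refine ⟨(1 + (a + b) * |K|) / b, fun t ht => ?_⟩
      obtain ⟨p1, p2⟩ := p t (by linarith)
      have hk := hK t ht
      rw [ev1, ev2]
      set α := (PQ x n).1.eval (-t)
      set β := (PQ x n).2.eval (-t)
      have hk' : t * β ≤ |K| * α := hk.trans (mul_le_mul_of_nonneg_right (le_abs_self K) p1.le)
      have k0 := abs_nonneg K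
      have t0 : 0 ≤ t := by linarith
      have s1 : t * (α + (b + t * a) * β) ≤ (1 + (a + b) * |K|) * (t * α) := by
        have : (b + t * a) * (t * β) ≤ ((a + b) * t) * (|K| * α) := by
          apply mul_le_mul _ hk' (by positivity) (by positivity)
          nlinarith
        linarith
      refine s1.trans ?_
      rw [div_mul_eq_mul_div, le_div_iff₀ hb, mul_assoc]
      apply mul_le_mul_of_nonneg_left _ (by positivity)
      have : 0 ≤ a * α := by positivity
      have : 0 ≤ t * β := by positivity
      nlinarith

lemma Dlem {γ : ℝ} {x : ℕ → ℂ} (hP : PainleveP (γ : ℂ) x)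
    (hx : ∀ n, x n * (starRingEnd ℂ) (x n) = 1) (n : ℕ) (h : ∀ k ≤ n, 0 < (x k).im) :
    ∃ D : ℝ, ((n + 1 : ℕ) : ℝ) * (PQ x (n+1)).1.coeff (n+1) * D
        = - (γ / 2) * (PQ x (n+1)).2.coeff n ∧
      I * (x (n+1) - I * x n) = D * (I + x n * x (n+1)) := by
  have e1 : ∀ n, x n ^ 2 - 1 = 2 * I * (x n).im * x n := by
    intro n
    have := Complex.sub_conj (x n)
    push_cast at this
    linear_combination (x n) * this + hx n
  have e2 : ∀ n, x n ^ 2 + 1 = 2 * (x n).re * x n := by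
    intro n
    have := Complex.add_conj (x n)
    push_cast at this
    linear_combination (x n) * this - hx n
  have x0 : ∀ n, x n ≠ 0 := by
    intro n h0; have := hx n; rw [h0] at this; simp at this
  induction n with
  | zero =>
    obtain ⟨h1, -, h3⟩ := hP 0
    have hb := h 0 le_rfl
    refine ⟨γ / (2 * (x 0).im), ?_, ?_⟩
    · simp only [PQ]
      have : ((C (x 0).re - C (x 0).im * X) * 1 - X * 0 : ℝ[X]).coeff 1 = - (x 0).im := by
        simp
      rw [this]; simp
      field_simp
    · have hb' : ((x 0).im : ℂ) ≠ 0 := by exact_mod_cast hb.ne'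
      rw [e1] at h3
      simp only [zero_add, CharP.cast_eq_zero, zero_mul, sub_zero, one_mul] at h3 h1 ⊢
      have := x0 0
      push_cast
      field_simp at h3 ⊢
      linear_combination h3
  | succ n ih =>
    obtain ⟨D, hD, hD'⟩ := ih (fun k hk => h k (by omega))
    obtain ⟨h1, h2, h3⟩ := hP (n+1)
    have h2 := h2 (by omega)
    have hb := h (n+1) le_rfl
    have hb' : ((x (n+1)).im : ℂ) ≠ 0 := by exact_mod_cast hb.ne'
    obtain ⟨l1, l2⟩ := PQlead x n
    refine ⟨(γ + 2 * (n+1) * (x (n+1)).re * D) / (2 * (n+2) * (x (n+1)).im), ?_, ?_⟩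
    · rw [l1, l2]
      push_cast at hD ⊢
      field_simp
      linear_combination (-2 * (x (n+1)).re * (n + 2)) * hD
    · simp only [Nat.add_sub_cancel] at h2 h3
      have q : (x n + I * x (n+1)) / (I + x n * x (n+1)) = D := by
        rw [div_eq_iff h2, ← hD']
        linear_combination (x n) * I_mul_I
      rw [q, e1, e2] at h3
      have hn : ((n:ℂ) + 2) ≠ 0 := by exact_mod_cast (by omega : n + 2 ≠ 0)
      have := x0 (n+1)
      set z := (x (n+1+1) - I * x (n+1)) / (I + x (n+1) * x (n+1+1)) with hz
      have hz' : x (n+1+1) - I * x (n+1) = z * (I + x (n+1) * x (n+1+1)) := by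
        rw [hz, div_mul_cancel₀ _ h1]
      rw [hz', ← mul_assoc]
      congr 1
      push_cast at h3 ⊢
      rw [eq_div_iff (mul_ne_zero (mul_ne_zero two_ne_zero hn) hb')]
      apply mul_right_cancel₀ this
      linear_combination h3

lemma main {γ : ℝ} (hγ0 : 0 < γ) (hγ2 : γ < 2) {x : ℕ → ℂ} (hunit : ∀ n : ℕ, ‖x n‖ = 1)
    (hP : PainleveP (γ : ℂ) x)
    (hx0 : x 0 = Complex.exp (Complex.I * (γ * Real.pi / 4))) (n : ℕ) :
    (∀ k < n + 1, 0 < (x k).re ∧ 0 < (x k).im) ∧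
    (∀ g : ℝ[X], g.natDegree < n + 1 → W (γ/2) (n+1) ((PQ x (n+1)).1 * g) = 0) ∧
    (∀ g : ℝ[X], g.natDegree + 1 < n + 1 → W (γ/2) (n+1) (X * (PQ x (n+1)).2 * g) = 0) := by
  have hc0 : 0 < γ / 2 := by linarith
  have hc1 : γ / 2 < 1 := by linarith
  have hx : ∀ n, x n * (starRingEnd ℂ) (x n) = 1 := by
    intro n; rw [Complex.mul_conj, Complex.normSq_eq_norm_sq, hunit]; simp
  have hs : ∀ n, (x n).re ^ 2 + (x n).im ^ 2 = 1 := by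
    intro n
    have := Complex.normSq_eq_norm_sq (x n)
    rw [hunit, Complex.normSq_apply] at this
    linarith
  induction n with
  | zero =>
    have hθ : x 0 = ⟨Real.cos (Real.pi * (γ/2) / 2), Real.sin (Real.pi * (γ/2) / 2)⟩ := by
      rw [hx0, show Complex.I * (γ * Real.pi / 4) = ((Real.pi * (γ/2) / 2 : ℝ) : ℂ) * I by
        push_cast; ring, Complex.exp_mul_I, ← Complex.ofReal_cos, ← Complex.ofReal_sin]
      generalize Real.pi * (γ/2) / 2 = θ
      apply Complex.ext
      · simp; rfl
      · simp; rfl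
    have hpi := Real.pi_pos
    have hre : (x 0).re = Real.cos (Real.pi * (γ/2) / 2) := by rw [hθ]
    have him : (x 0).im = Real.sin (Real.pi * (γ/2) / 2) := by rw [hθ]
    refine ⟨?_, ?_, ?_⟩
    · intro k hk
      obtain rfl : k = 0 := by omega
      rw [hre, him]
      constructor
      · apply Real.cos_pos_of_mem_Ioo; constructor <;> nlinarith
      · apply Real.sin_pos_of_pos_of_lt_pi <;> nlinarith
    · intro g hg
      rw [Polynomial.eq_C_of_natDegree_eq_zero (by omega : g.natDegree = 0)]
      have e : (PQ x (0+1)).1 * C (g.coeff 0) = (g.coeff 0 * (x 0).re) • X ^ 0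
          - (g.coeff 0 * (x 0).im) • X ^ 1 := by
        rw [PQ1]; simp only [PQ, smul_eq_C_mul, map_mul]; ring
      rw [e, map_sub, map_smul, map_smul, W_pow _ (by omega), W_pow _ (by omega), hre, him]
      have := base_moments hc0 hc1
      simp only [smul_eq_mul, zero_add]
      linear_combination (g.coeff 0) * this
    · intro g hg; omega
  | succ n ih =>
    obtain ⟨hpos, oA, oB⟩ := ih
    obtain ⟨d1, d2⟩ := PQdeg x n
    obtain ⟨D, hD, hD'⟩ := Dlem hP hx n (fun k hk => (hpos k (by omega)).2)
    obtain ⟨hp, K, hK⟩ := PQpos x (n+1) hpos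
    obtain ⟨ha, hb⟩ := hpos n (by omega)
    have hA0 : (PQ x (n+1)).1 ≠ 0 := by
      intro h; have := (hp 0 le_rfl).1; rw [h] at this; simp at this
    have hB0 : (PQ x (n+1)).2 ≠ 0 := by
      intro h
      have h0 := (hp 0 le_rfl).1
      have hq := PQpos x n (fun k hk => hpos k (by omega))
      have h1 := hq.1 0 le_rfl
      have h2 : (PQ x (n+1)).2.eval (-0) = (PQ x n).1.eval (-0) + (x n).im * (PQ x n).2.eval (-0) := by
        rw [PQ2]; simp
      rw [h] at h2; simp only [eval_zero] at h2
      have := mul_nonneg hb.le h1.2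
      linarith [h1.1]
    obtain ⟨o1, o2, o3⟩ := step hc0 hc1 (by omega : 1 ≤ n + 1) d1 (by omega) oA oB hA0 hB0
      (hx n) ha (PQI x n (hx n)) (D := D) (y := x (n+1)) (by simpa using hD)
      (by linear_combination hD' + (x n) * I_mul_I) (hs (n+1))
    rw [← PQ1] at o1
    rw [← PQ2] at o2
    have hne : (PQ x (n+1+1)).1 ≠ 0 := by
      intro h
      have h1 : (PQ x (n+1+1)).1.eval (-0) = (x (n+1)).re * (PQ x (n+1)).1.eval (-0) := by
        rw [PQ1]; simp
      rw [h, eval_zero] at h1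
      have hre : (x (n+1)).re = 0 := by
        rcases mul_eq_zero.1 h1.symm with h2 | h2
        · exact h2
        · exact absurd h2 (hp 0 le_rfl).1.ne'
      have h2 : (PQ x (n+1+1)).1.eval (-1) = ((x (n+1)).re + (x (n+1)).im) * (PQ x (n+1)).1.eval (-1)
          + (PQ x (n+1)).2.eval (-1) := by
        rw [PQ1]; simp
      rw [h, eval_zero, hre] at h2
      have him : 0 < (x (n+1)).im := by
        rw [hre] at o3
        by_contra hc; push Not at hc; nlinarith
      obtain ⟨q1, q2⟩ := hp 1 zero_le_one
      nlinarith
    have dn := (PQdeg x (n+1)).1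
    rw [PQ1] at dn hne
    have fin := uv hc0 hc1 d1 (by omega) (fun t ht => (hp t ht).1) (fun t ht => (hp t ht).2) hK
      ha hb o3 dn (by rw [← PQ1]; exact o1) hne
    refine ⟨?_, o1, o2⟩
    intro k hk
    rcases Nat.lt_succ_iff_lt_or_eq.1 hk with hk | hk
    · exact hpos k hk
    · rw [hk]; exact fin

end PainleveAux

/-- The unitary solution of the discrete Painlevé equation (P) with
`x_0 = e^{iγπ/4}` stays in the open arc `{e^{iθ} : 0 < θ < π/2}`. -/
theorem painleve_separatrix_stays_in_arc (γ : ℝ) (hγ0 : 0 < γ) (hγ2 : γ < 2)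
    (x : ℕ → ℂ) (hunit : ∀ n : ℕ, ‖x n‖ = 1)
    (hP : PainleveP (γ : ℂ) x)
    (hx0 : x 0 = Complex.exp (Complex.I * (γ * Real.pi / 4))) :
    ∀ n : ℕ, ∃ θ : ℝ, θ ∈ Set.Ioo 0 (Real.pi / 2) ∧
      x n = Complex.exp (Complex.I * θ) := by
  intro n
  obtain ⟨h1, h2⟩ := (PainleveAux.main hγ0 hγ2 hunit hP hx0 n).1 n (by omega)
  refine ⟨Complex.arg (x n), ⟨?_, ?_⟩, ?_⟩
  · apply lt_of_le_of_ne (Complex.arg_nonneg_iff.2 h2.le)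
    intro h
    have := (Complex.arg_eq_zero_iff.1 h.symm).2
    linarith
  · have h := Complex.abs_arg_lt_pi_div_two_iff.2 (Or.inl h1)
    exact (abs_lt.1 h).2
  · have h := Complex.norm_mul_exp_arg_mul_I (x n)
    rw [hunit, Complex.ofReal_one, one_mul] at h
    rw [mul_comm]; exact h.symm

end
end

section
/- Let γ ∈ ℝ and let R : ℤ + iℤ → ℝ be nowhere zero. If R satisfies equation (square) with parameter γ at every z ∈ V_l and equation (Ri) at every z ∈ V_int, then the function R̃(z) = 1/R(z) satisfies equation (square) with parameter 2 − γ at every z ∈ V_l and equation (Ri) at every z ∈ V_int. -/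
noncomputable section

/-- Equation (square) with parameter `γ` at `z = N + iM` (the lattice `ℤ + iℤ` is
indexed by pairs `(N, M)`). -/
def SquareEq (γ : ℝ) (R : ℤ → ℤ → ℝ) (N M : ℤ) : Prop :=
  R N M * R (N+1) M * (-2*(M : ℝ) - γ) +
  R (N+1) M * R (N+1) (M+1) * (2*((N : ℝ)+1) - γ) +
  R (N+1) (M+1) * R N (M+1) * (2*((M : ℝ)+1) - γ) +
  R N (M+1) * R N M * (-2*(N : ℝ) - γ) = 0

/-- Equation (Ri) at `z = N + iM`. -/
def RiEq (R : ℤ → ℤ → ℝ) (N M : ℤ) : Prop :=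
  ((N + M : ℤ) : ℝ) * (R N M ^ 2 - R (N+1) M * R N (M-1)) * (R N (M+1) + R (N+1) M) +
  ((M - N : ℤ) : ℝ) * (R N M ^ 2 - R N (M+1) * R (N+1) M) * (R (N+1) M + R N (M-1)) = 0

/-- Membership `N + iM ∈ V_l = V ∪ {-k + i(k-1) : k ∈ ℕ}`. -/
def memVl (N M : ℤ) : Prop := |N| ≤ M ∨ (N ≤ -1 ∧ M = -N - 1)

/-- Duality: if `R` solves (square) with parameter `γ` on `V_l` and (Ri) on `V_int`,
then `R̃ = 1/R` solves (square) with parameter `2 - γ` on `V_l` and (Ri) on `V_int`. -/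
theorem dual_radius_function (γ : ℝ) (R : ℤ → ℤ → ℝ)
    (hR : ∀ N M : ℤ, R N M ≠ 0)
    (hsq : ∀ N M : ℤ, memVl N M → SquareEq γ R N M)
    (hRi : ∀ N M : ℤ, |N| < M → RiEq R N M) :
    (∀ N M : ℤ, memVl N M → SquareEq (2 - γ) (fun N' M' => 1 / R N' M') N M) ∧
    (∀ N M : ℤ, |N| < M → RiEq (fun N' M' => 1 / R N' M') N M) := by
  constructor
  · intro N M h
    have h1 := hsq N M h
    unfold SquareEq at h1 ⊢
    beta_reduce
    have ha := hR N M
    have hb := hR (N+1) M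
    have hc := hR (N+1) (M+1)
    have hd := hR N (M+1)
    generalize R N M = a at *
    generalize R (N+1) M = b at *
    generalize R (N+1) (M+1) = c at *
    generalize R N (M+1) = d at *
    rw [← mul_right_inj' (mul_ne_zero (mul_ne_zero ha hb) (mul_ne_zero hc hd)), mul_zero,
      ← neg_eq_zero, ← h1]
    push_cast
    field_simp
    ring
  · intro N M h
    have h1 := hRi N M h
    unfold RiEq at h1 ⊢
    beta_reduce
    have ha := hR N M
    have hb := hR (N+1) M
    have hc := hR N (M-1)
    have hd := hR N (M+1)
    generalize R N M = a at *
    generalize R (N+1) M = b at *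
    generalize R N (M-1) = c at *
    generalize R N (M+1) = d at *
    rw [← mul_right_inj' (mul_ne_zero (mul_ne_zero (pow_ne_zero 2 ha) (pow_ne_zero 2 hb))
      (mul_ne_zero hc hd)), mul_zero, ← neg_eq_zero, ← h1]
    push_cast
    field_simp
    ring

end
end

section
/- Let f : ℤ≥0 × ℤ≥0 → ℂ satisfy the multiplied-out cross-ratio equation (q') at every (n,m) and the multiplied-out constraint (c') with parameter γ = 2 at every (n,m), with initial conditions f_{0,0} = f_{1,0} = f_{0,1} = 0, f_{2,0} = 1, f_{0,2} = −1, f_{1,1} = 2i/π (the discrete Z²). Then f is an immersion: for any two adjacent elementary quadrilaterals, the interiors of the convex hulls of their four vertices are disjoint. -/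
open Complex

noncomputable section

/-- Vertex set of the elementary quadrilateral at `(n,m)`. -/
def quadVerts (f : ℕ → ℕ → ℂ) (n m : ℕ) : Set ℂ :=
  {f n m, f (n+1) m, f (n+1) (m+1), f n (m+1)}

/-- Interior of the convex hull of the elementary quadrilateral at `(n,m)`. -/
def quadInt (f : ℕ → ℕ → ℂ) (n m : ℕ) : Set ℂ :=
  interior (convexHull ℝ (quadVerts f n m))

/-- `f` is an immersion: interiors of (convex hulls of) adjacent elementary
quadrilaterals are disjoint. -/
def IsImmersion (f : ℕ → ℕ → ℂ) : Prop :=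
  ∀ n m : ℕ,
    Disjoint (quadInt f n m) (quadInt f (n+1) m) ∧
    Disjoint (quadInt f n m) (quadInt f n (m+1))

/-- The multiplied-out cross-ratio equation (q'). -/
def CrossRatioEq' (f : ℕ → ℕ → ℂ) : Prop :=
  ∀ n m : ℕ,
    (f n m - f (n+1) m) * (f (n+1) (m+1) - f n (m+1)) +
      (f (n+1) m - f (n+1) (m+1)) * (f n (m+1) - f n m) = 0

/-- The multiplied-out constraint (c') with parameter `γ`; for `n = 0`
(resp. `m = 0`) the corresponding term (and the corresponding denominator factor)
is absent. -/
def ConstraintC' (γ : ℂ) (f : ℕ → ℕ → ℂ) : Prop :=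
  ∀ n m : ℕ,
    if n = 0 then
      (if m = 0 then γ * f 0 0 = 0
       else γ * f 0 m * (f 0 (m+1) - f 0 (m-1)) =
         2 * (m : ℂ) * ((f 0 (m+1) - f 0 m) * (f 0 m - f 0 (m-1))))
    else if m = 0 then
      γ * f n 0 * (f (n+1) 0 - f (n-1) 0) =
        2 * (n : ℂ) * ((f (n+1) 0 - f n 0) * (f n 0 - f (n-1) 0))
    else
      γ * f n m * ((f (n+1) m - f (n-1) m) * (f n (m+1) - f n (m-1))) =
        2 * (n : ℂ) * ((f (n+1) m - f n m) * (f n m - f (n-1) m)) * (f n (m+1) - f n (m-1)) +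
        2 * (m : ℂ) * ((f n (m+1) - f n m) * (f n m - f n (m-1))) * (f (n+1) m - f (n-1) m)


theorem aux_L1 (n m R A C D X Y : ℝ) (hn : 0 < n) (hm : 0 < m) (hD : 0 < D) (hR : 0 < R)
    (hG : n*(R^2-D*C)*(A+D) + m*(R^2-A*D)*(D+C) = 0)
    (h1 : A*((n+m)*X-(n-m+2)*R) = D*((n+m+2)*R-(n-m)*X))
    (h2 : C*((n+m)*Y+(n-m+2)*R) = D*((n-m)*Y+(n+m-2)*R)) :
    (m-1)*(D^2-R*Y)*(X+R) + (n+1)*(D^2-X*R)*(R+Y) = 0 := by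
  have key : (4*n*m*D*R) * ((m-1)*(D^2-R*Y)*(X+R) + (n+1)*(D^2-X*R)*(R+Y)) = 0 := by
    obtain ⟨a2, ha2⟩ : ∃ a2, a2 = (n+m)*X-(n-m+2)*R := ⟨_, rfl⟩
    obtain ⟨a1, ha1⟩ : ∃ a1, a1 = (n+m+2)*R-(n-m)*X := ⟨_, rfl⟩
    obtain ⟨c2, hc2⟩ : ∃ c2, c2 = (n+m)*Y+(n-m+2)*R := ⟨_, rfl⟩
    obtain ⟨c1, hc1⟩ : ∃ c1, c1 = (n-m)*Y+(n+m-2)*R := ⟨_, rfl⟩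
    rw [← ha2, ← ha1] at h1
    rw [← hc2, ← hc1] at h2
    have e : n*(R^2*c2-D*(D*c1))*(D*a1+D*a2) + m*(R^2*a2-(D*a1)*D)*(D*c2+D*c1) = 0 := by
      rw [← h1, ← h2]; linear_combination a2*c2*hG
    subst ha2 ha1 hc2 hc1
    linear_combination -e
  have : 4*n*m*D*R ≠ 0 := by positivity
  exact (mul_eq_zero.mp key).resolve_left this

theorem aux_L2 (n m Q A B D X Y : ℝ) (hn : 0 < n) (hm : 0 < m) (hA : 0 < A) (hQ : 0 < Q)
    (hG : m*(Q^2-A*D)*(A+B) = n*(Q^2-A*B)*(A+D))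
    (h1 : B*((n+m+2)*Q+(n-m)*X) = A*((n-m-2)*Q+(n+m)*X))
    (h2 : D*((n-m)*Y-(n+m+2)*Q) = A*((n-m+2)*Q-(n+m)*Y)) :
    (m+1)*(A^2-X*Q)*(Q+Y) = (n+1)*(A^2-Q*Y)*(X+Q) := by
  have key : (4*n*m*A*Q) * ((m+1)*(A^2-X*Q)*(Q+Y) - (n+1)*(A^2-Q*Y)*(X+Q)) = 0 := by
    obtain ⟨a2, ha2⟩ : ∃ a2, a2 = (n+m+2)*Q+(n-m)*X := ⟨_, rfl⟩
    obtain ⟨a1, ha1⟩ : ∃ a1, a1 = (n-m-2)*Q+(n+m)*X := ⟨_, rfl⟩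
    obtain ⟨c2, hc2⟩ : ∃ c2, c2 = (n-m)*Y-(n+m+2)*Q := ⟨_, rfl⟩
    obtain ⟨c1, hc1⟩ : ∃ c1, c1 = (n-m+2)*Q-(n+m)*Y := ⟨_, rfl⟩
    rw [← ha2, ← ha1] at h1
    rw [← hc2, ← hc1] at h2
    have e : m*(Q^2*c2-A*(A*c1))*(A*a2+A*a1) = n*(Q^2*a2-A*(A*a1))*(A*c2+A*c1) := by
      rw [← h1, ← h2]; linear_combination a2*c2*hG
    subst ha2 ha1 hc2 hc1
    linear_combination e
  have : 4*n*m*A*Q ≠ 0 := by positivity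
  linarith [(mul_eq_zero.mp key).resolve_left this]

theorem aux_L2' (n Q A B X Y : ℝ) (hn : 0 < n)
    (hG : A*B = Q^2)
    (h1 : B*((n+2)*Q+n*X) = A*((n-2)*Q+n*X))
    (h2 : n*Y = (n+2)*Q) :
    (A^2-X*Q)*(Q+Y) = (n+1)*(A^2-Q*Y)*(X+Q) := by
  have key : n * ((A^2-X*Q)*(Q+Y) - (n+1)*(A^2-Q*Y)*(X+Q)) = 0 := by
    linear_combination (A^2-X*Q+(n+1)*Q*(X+Q))*h2 + (n+1)*A*h1 - (n+1)*((n+2)*Q+n*X)*hG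
  linarith [(mul_eq_zero.mp key).resolve_left hn.ne']

theorem aux_S (n m R A B C D : ℝ) (hn : 0 < n) (hBC : 0 < B + C)
    (h1 : m*(R^2-B*C)*(A+B)+n*(R^2-A*B)*(B+C)=0)
    (h2 : m*(R^2-B*C)*(C+D) = n*(R^2-C*D)*(B+C)) :
    (R^2-A*B)*(C+D)+(R^2-C*D)*(A+B) = 0 := by
  have key : (n*(B+C)) * ((R^2-A*B)*(C+D)+(R^2-C*D)*(A+B)) = 0 := by
    linear_combination (C+D)*h1 - (A+B)*h2
  exact (mul_eq_zero.mp key).resolve_left (by positivity)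

-- G from G* and S
theorem aux_G (n m R A B C D : ℝ) (hAB : 0 < A + B) (hBC : 0 < B + C)
    (hS : (R^2-A*B)*(C+D)+(R^2-C*D)*(A+B) = 0)
    (h1 : m*(R^2-B*C)*(A+B)+n*(R^2-A*B)*(B+C)=0) :
    n*(R^2-D*C)*(A+D) + m*(R^2-A*D)*(D+C) = 0 := by
  have key : ((A+B)*(B+C)) * (n*(R^2-D*C)*(A+D) + m*(R^2-A*D)*(D+C)) = 0 := by
    have hS' : (R^2-B*C)*(A+D)+(R^2-A*D)*(B+C) = 0 := by linear_combination hS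
    linear_combination n*(B+C)*(A+D)*hS + m*(D+C)*(A+B)*hS' -(A+D)*(C+D)*h1
  exact (mul_eq_zero.mp key).resolve_left (by positivity)

theorem aux_G4 (n m R A B C D : ℝ) (hBC : 0 < B + C)
    (hS : (R^2-A*B)*(C+D)+(R^2-C*D)*(A+B) = 0)
    (h1 : m*(R^2-B*C)*(A+B)+n*(R^2-A*B)*(B+C)=0) :
    m*(R^2-A*D)*(A+B) = n*(R^2-A*B)*(A+D) := by
  have key : (B+C) * (m*(R^2-A*D)*(A+B) - n*(R^2-A*B)*(A+D)) = 0 := by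
    have hS' : (R^2-B*C)*(A+D)+(R^2-A*D)*(B+C) = 0 := by linear_combination hS
    linear_combination m*(A+B)*hS' - (A+D)*h1
  linarith [(mul_eq_zero.mp key).resolve_left (by positivity)]

def gnext (k : ℕ) (p : ℕ → ℝ) : ℕ → ℝ
  | 0 => (k:ℝ) + 1
  | m+1 => p (m+1) * (((m:ℝ)+k+2) * gnext k p m + ((k:ℝ)+1) * p (m+2)) /
      ((k:ℝ) * gnext k p m + ((m:ℝ)+1+k) * p (m+2))

def gg (d : ℕ → ℝ) : ℕ → ℕ → ℝ
  | 0 => d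
  | k+1 => gnext k (gg d k)

theorem gg_zero (d : ℕ → ℝ) (m : ℕ) : gg d 0 m = d m := rfl
theorem gg_col0 (d : ℕ → ℝ) (hd : d 0 = 0) (k : ℕ) : gg d k 0 = k := by
  cases k with
  | zero => simpa [gg] using hd
  | succ k => simp [gg, gnext]

theorem gg_step (d : ℕ → ℝ) (k m : ℕ) : gg d (k+1) (m+1) =
    gg d k (m+1) * (((m:ℝ)+k+2) * gg d (k+1) m + ((k:ℝ)+1) * gg d k (m+2)) /
      ((k:ℝ) * gg d (k+1) m + ((m:ℝ)+1+k) * gg d k (m+2)) := rfl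

theorem gg_pos (d : ℕ → ℝ) (hd : d 0 = 0) (M : ℕ) (hpos : ∀ m, 1 ≤ m → m ≤ M → 0 < d m) :
    ∀ k m, 1 ≤ k + m → k + m ≤ M → 0 < gg d k m := by
  intro k
  induction k with
  | zero => intro m h1 h2; exact hpos m (by omega) (by omega)
  | succ k ih =>
    intro m
    induction m with
    | zero => intro _ _; rw [gg_col0 d hd]; positivity
    | succ m ihm =>
      intro h1 h2
      rw [gg_step]
      have a := ihm (by omega) (by omega)
      have b := ih (m+1) (by omega) (by omega)
      have c := ih (m+2) (by omega) (by omega)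
      positivity

theorem gg_E (d : ℕ → ℝ) (hd : d 0 = 0) (M : ℕ) (hpos : ∀ m, 1 ≤ m → m ≤ M → 0 < d m)
    (k m : ℕ) (h : k + m + 2 ≤ M) :
    gg d (k+1) (m+1) * ((k:ℝ) * gg d (k+1) m + ((m:ℝ)+1+k) * gg d k (m+2)) =
    gg d k (m+1) * (((m:ℝ)+k+2) * gg d (k+1) m + ((k:ℝ)+1) * gg d k (m+2)) := by
  have P := gg_pos d hd M hpos
  rw [gg_step]
  have a := P (k+1) m (by omega) (by omega)
  have c := P k (m+2) (by omega) (by omega)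
  field_simp

/-- `G` at centre (k,m+1). -/
def GP (d : ℕ → ℝ) (k m : ℕ) : Prop :=
  (((m:ℝ)+1)+2*k)*((gg d k (m+1))^2-gg d (k+1) m*gg d k m)*(gg d k (m+2)+gg d (k+1) m)
   + ((m:ℝ)+1)*((gg d k (m+1))^2-gg d k (m+2)*gg d (k+1) m)*(gg d (k+1) m+gg d k m) = 0

/-- Schramm at centre (k+1,m+1). -/
def SP (d : ℕ → ℝ) (k m : ℕ) : Prop :=
  ((gg d (k+1) (m+1))^2-gg d (k+1) (m+2)*gg d k (m+2))*(gg d (k+1) m + gg d (k+2) m)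
   + ((gg d (k+1) (m+1))^2-gg d (k+1) m*gg d (k+2) m)*(gg d (k+1) (m+2) + gg d k (m+2)) = 0

theorem gg_main (d : ℕ → ℝ) (hd : d 0 = 0) (M : ℕ) (hpos : ∀ m, 1 ≤ m → m ≤ M → 0 < d m)
    (hS : ∀ m, m + 1 < M → GP d 0 m) :
    ∀ k, (∀ m, k + m + 1 < M → GP d k m) ∧ (∀ m, k + m + 2 < M → SP d k m) ∧
      (k + 1 < M → gg d (k+1) 1 * gg d k 1 = ((k:ℝ)+1)^2) := by
  have P := gg_pos d hd M hpos
  have E := gg_E d hd M hpos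
  have step : ∀ k, (∀ m, k + m + 1 < M → GP d k m) →
      (∀ m, k + 1 + m + 1 < M → GP d (k+1) m) ∧ (∀ m, k + m + 2 < M → SP d k m) ∧
      (k + 1 < M → gg d (k+1) 1 * gg d k 1 = ((k:ℝ)+1)^2) := by
    intro k hk
    -- G* at (k+1,0)
    have b0 : k + 1 < M → gg d (k+1) 1 * gg d k 1 = ((k:ℝ)+1)^2 := by
      intro h
      have := aux_L1 (1+2*k) 1 (gg d k 1) (gg d k 2) (gg d k 0) (gg d (k+1) 0) (gg d (k+1) 1)
        (gg d k 1) (by positivity) (by norm_num) (P _ _ (by omega) (by omega))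
        (P _ _ (by omega) (by omega))
        (by have := hk 0 (by omega); simp only [GP] at this; push_cast at this
            simp only [zero_add] at this; linear_combination this)
        (by have := E k 0 (by omega); push_cast at this
            simp only [zero_add] at this; linear_combination 2*this)
        (by rw [gg_col0 d hd, gg_col0 d hd]; push_cast; ring)
      rw [gg_col0 d hd] at this
      push_cast at this
      have h3 : (2*((k:ℝ)+1)*(2*gg d k 1)) * (((k:ℝ)+1)^2 - gg d (k+1) 1 * gg d k 1) = 0 := by
        linear_combination this
      have := P k 1 (by omega) (by omega)
      linarith [(mul_eq_zero.mp h3).resolve_left (by positivity)]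
    -- G* at (k+1,m+1)
    have gs : ∀ m, k + m + 2 < M →
        ((m:ℝ)+1)*((gg d (k+1) (m+1))^2 - gg d k (m+2)*gg d (k+1) m)*(gg d (k+1) (m+2)+gg d k (m+2))
        + ((m:ℝ)+3+2*k)*((gg d (k+1) (m+1))^2 - gg d (k+1) (m+2)*gg d k (m+2))*
          (gg d k (m+2)+gg d (k+1) m) = 0 := by
      intro m h
      have := aux_L1 ((m:ℝ)+2+2*k) ((m:ℝ)+2) (gg d k (m+2)) (gg d k (m+3)) (gg d k (m+1))
        (gg d (k+1) (m+1)) (gg d (k+1) (m+2))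
        (gg d (k+1) m) (by positivity) (by positivity) (P _ _ (by omega) (by omega))
        (P _ _ (by omega) (by omega))
        (by have := hk (m+1) (by omega); simp only [GP] at this; push_cast at this
            linear_combination this)
        (by have := E k (m+1) (by omega); push_cast at this
            linear_combination 2*this)
        (by have := E k m (by omega); push_cast at this
            linear_combination -2*this)
      linear_combination this
    have ss : ∀ m, k + m + 2 < M → SP d k m := by
      intro m
      induction m with
      | zero =>
        intro h
        have h3 := aux_L2' (2*((k:ℝ)+1)) (gg d (k+1) 0) (gg d (k+1) 1) (gg d k 1) (gg d k 2)
          (gg d (k+2) 0) (by positivity)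
          (by rw [b0 (by omega), gg_col0 d hd]; push_cast; ring)
          (by have := E k 0 (by omega); push_cast at this
              simp only [zero_add] at this; linear_combination -2*this)
          (by rw [gg_col0 d hd, gg_col0 d hd]; push_cast; ring)
        have p1 := P k 2 (by omega) (by omega)
        have p2 := P (k+1) 0 (by omega) (by omega)
        have hg := gs 0 h
        simp only [SP]
        push_cast at hg
        simp only [zero_add] at hg ⊢
        exact aux_S (3+2*(k:ℝ)) 1 _ _ _ _ _ (by positivity) (by positivity) (by linear_combination hg)
          (by linear_combination h3)
      | succ m ih =>
        intro h
        have hp := ih (by omega)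
        simp only [SP] at hp
        have p1 := P k (m+2) (by omega) (by omega)
        have p2 := P (k+1) m (by omega) (by omega)
        have g4 := aux_G4 ((m:ℝ)+3+2*k) ((m:ℝ)+1) _ _ _ _ _ (by positivity) hp
          (by linear_combination gs m (by omega))
        have h3 := aux_L2 ((m:ℝ)+3+2*k) ((m:ℝ)+1) (gg d (k+1) (m+1)) (gg d (k+1) (m+2))
          (gg d k (m+2)) (gg d (k+2) m) (gg d k (m+3)) (gg d (k+2) (m+1)) (by positivity)
          (by positivity) (P _ _ (by omega) (by omega)) (P _ _ (by omega) (by omega))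
          g4
          (by have := E k (m+1) (by omega); push_cast at this
              linear_combination -2*this)
          (by have := E (k+1) m (by omega); push_cast at this
              linear_combination 2*this)
        have p3 := P k (m+3) (by omega) (by omega)
        have p4 := P (k+1) (m+1) (by omega) (by omega)
        have hg := gs (m+1) (by omega)
        push_cast at hg
        simp only [SP]
        exact aux_S ((m:ℝ)+4+2*k) ((m:ℝ)+2) _ _ _ _ _ (by positivity) (by positivity)
          (by linear_combination hg) (by linear_combination h3)
    refine ⟨?_, ss, b0⟩
    intro m h
    have hp := ss m (by omega)
    simp only [SP] at hp
    have p1 := P k (m+2) (by omega) (by omega)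
    have p2 := P (k+1) m (by omega) (by omega)
    have p3 := P (k+1) (m+2) (by omega) (by omega)
    have := aux_G ((m:ℝ)+3+2*k) ((m:ℝ)+1) _ _ _ _ _ (by positivity) (by positivity) hp
          (by linear_combination gs m (by omega))
    simp only [GP]; push_cast; linear_combination this
  have all : ∀ k, (∀ m, k + m + 1 < M → GP d k m) := by
    intro k
    induction k with
    | zero => intro m h; exact hS m (by omega)
    | succ k ih => exact (step k ih).1
  exact fun k => ⟨all k, (step k (all k)).2⟩

def zz (m : ℕ) (x y : ℝ) : ℂ :=
  ⟨(m:ℝ) * Real.sin y ^ 2 * Real.cos ((Real.pi/2+x-y)/2),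
   Real.sin y * Real.cos y * Real.cos ((Real.pi/2+x-y)/2)
    + ((m:ℝ)+1) * Real.cos y ^ 2 * Real.sin ((Real.pi/2+x-y)/2)⟩

def TT (m : ℕ) (x y : ℝ) : ℝ := Real.pi/2 + y - 2 * (zz m x y).arg

def clampc (x : ℝ) : ℝ := max 0 (min x (Real.pi/2))

theorem clampc_mem (x : ℝ) : 0 ≤ clampc x ∧ clampc x ≤ Real.pi/2 := by
  have := Real.pi_pos
  unfold clampc
  exact ⟨le_max_left _ _, max_le (by positivity) (min_le_right _ _)⟩

theorem clampc_of_nonpos {x : ℝ} (h : x ≤ 0) : clampc x = 0 := by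
  unfold clampc
  exact max_eq_left ((min_le_left _ _).trans h)

theorem clampc_of_ge {x : ℝ} (h : Real.pi/2 ≤ x) : clampc x = Real.pi/2 := by
  have := Real.pi_pos
  unfold clampc
  rw [min_eq_right h, max_eq_right (by positivity)]

theorem clampc_of_lt {x : ℝ} (h0 : 0 < clampc x) (h1 : clampc x < Real.pi/2) : clampc x = x := by
  have a : 0 < x := by
    by_contra h
    rw [clampc_of_nonpos (not_lt.mp h)] at h0
    exact lt_irrefl _ h0
  have b : x < Real.pi/2 := by
    by_contra h
    rw [clampc_of_ge (not_lt.mp h)] at h1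
    exact lt_irrefl _ h1
  unfold clampc
  rw [min_eq_left b.le, max_eq_right a.le]

def gam : ℕ → ℝ → ℝ
  | 0, _ => Real.pi/2
  | 1, θ => clampc θ
  | (m+2), θ => clampc (TT (m+1) (gam m θ) (gam (m+1) θ))

theorem gam_zero (θ : ℝ) : gam 0 θ = Real.pi/2 := by rw [gam]
theorem gam_one (θ : ℝ) : gam 1 θ = clampc θ := by rw [gam]
theorem gam_succ (m : ℕ) (θ : ℝ) :
  gam (m+2) θ = clampc (TT (m+1) (gam m θ) (gam (m+1) θ)) := by rw [gam]

theorem gam_mem (m : ℕ) (θ : ℝ) : 0 ≤ gam m θ ∧ gam m θ ≤ Real.pi/2 := by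
  have := Real.pi_pos
  match m with
  | 0 => rw [gam_zero]; constructor <;> linarith
  | 1 => rw [gam_one]; exact clampc_mem _
  | (m+2) => rw [gam_succ]; exact clampc_mem _

theorem zz_slit (m : ℕ) (hm : 1 ≤ m) (x y : ℝ) (hx0 : 0 ≤ x) (hx : x ≤ Real.pi/2) (hy0 : 0 ≤ y)
    (hy : y ≤ Real.pi/2) : zz m x y ∈ Complex.slitPlane := by
  have hpi := Real.pi_pos
  rw [Complex.mem_slitPlane_iff]
  have hm' : (0:ℝ) < m := by exact_mod_cast hm
  rcases hy0.eq_or_lt with h | h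
  · right
    subst h
    have : 0 < Real.sin ((Real.pi/2+x-0)/2) :=
      Real.sin_pos_of_pos_of_lt_pi (by linarith) (by linarith)
    simp only [zz, Real.sin_zero, Real.cos_zero]
    have h2 : 0 < ((m:ℝ)+1) * Real.sin ((Real.pi/2+x-0)/2) := by positivity
    apply ne_of_gt
    linarith
  · left
    have a : 0 < Real.sin y := Real.sin_pos_of_pos_of_lt_pi h (by linarith)
    have b : 0 < Real.cos ((Real.pi/2+x-y)/2) :=
      Real.cos_pos_of_mem_Ioo ⟨by linarith, by linarith⟩
    simp only [zz]
    positivity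

theorem TT_zero (m : ℕ) (x : ℝ) (hx0 : 0 ≤ x) (hx : x ≤ Real.pi/2) : TT m x 0 < 0 := by
  have hpi := Real.pi_pos
  have : 0 < Real.sin ((Real.pi/2+x-0)/2) :=
      Real.sin_pos_of_pos_of_lt_pi (by linarith) (by linarith)
  have h : (zz m x 0).arg = Real.pi/2 := by
    rw [Complex.arg_eq_pi_div_two_iff]
    simp only [zz, Real.sin_zero, Real.cos_zero]
    constructor
    · ring
    · have h2 : 0 < ((m:ℝ)+1) * Real.sin ((Real.pi/2+x-0)/2) := by positivity
      linarith
  rw [TT, h]; linarith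

theorem TT_top (m : ℕ) (x : ℝ) (hx0 : 0 ≤ x) (hx : x ≤ Real.pi/2) :
    Real.pi/2 < TT m x (Real.pi/2) := by
  have hpi := Real.pi_pos
  have : 0 < Real.cos ((Real.pi/2+x-Real.pi/2)/2) :=
      Real.cos_pos_of_mem_Ioo ⟨by linarith, by linarith⟩
  have h : (zz m x (Real.pi/2)).arg = 0 := by
    rw [Complex.arg_eq_zero_iff]
    simp only [zz, Real.sin_pi_div_two, Real.cos_pi_div_two]
    constructor
    · positivity
    · ring
  rw [TT, h]; linarith

theorem gam_cont_aux (m : ℕ) (h0 : Continuous (gam m)) (h1 : Continuous (gam (m+1))) :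
    Continuous (fun θ => TT (m+1) (gam m θ) (gam (m+1) θ)) := by
  have hz : Continuous (fun θ => zz (m+1) (gam m θ) (gam (m+1) θ)) := by
    have : (fun θ => zz (m+1) (gam m θ) (gam (m+1) θ)) = fun θ =>
      (((zz (m+1) (gam m θ) (gam (m+1) θ)).re : ℝ) : ℂ) +
        (((zz (m+1) (gam m θ) (gam (m+1) θ)).im : ℝ) : ℂ) * Complex.I := by
      funext θ; rw [Complex.re_add_im]
    rw [this]
    simp only [zz]
    fun_prop
  have harg : Continuous (fun θ => (zz (m+1) (gam m θ) (gam (m+1) θ)).arg) := by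
    rw [continuous_iff_continuousAt]
    intro θ
    have := Complex.continuousAt_arg (zz_slit (m+1) (by omega) (gam m θ) (gam (m+1) θ)
      (gam_mem _ _).1 (gam_mem _ _).2 (gam_mem _ _).1 (gam_mem _ _).2)
    exact ContinuousAt.comp (f := fun θ => zz (m+1) (gam m θ) (gam (m+1) θ)) this hz.continuousAt
  unfold TT
  fun_prop

theorem clampc_cont : Continuous clampc := by
  unfold clampc; fun_prop

theorem gam_cont (m : ℕ) : Continuous (gam m) ∧ Continuous (gam (m+1)) := by
  induction m with
  | zero =>
    constructor
    · have : gam 0 = fun _ => Real.pi/2 := by funext θ; exact gam_zero θ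
      rw [this]; fun_prop
    · have : gam (0+1) = clampc := by funext θ; exact gam_one θ
      rw [this]; exact clampc_cont
  | succ m ih =>
    refine ⟨ih.2, ?_⟩
    have : gam (m+1+1) = fun θ => clampc (TT (m+1) (gam m θ) (gam (m+1) θ)) := by
      funext θ; exact gam_succ m θ
    rw [this]
    exact clampc_cont.comp (gam_cont_aux m ih.1 ih.2)

theorem gam_absorb0 (θ : ℝ) (j : ℕ) (h : gam (j+1) θ = 0) (i : ℕ) : gam (j+1+i) θ = 0 := by
  induction i with
  | zero => exact h
  | succ i ih =>
    have e : j + 1 + (i+1) = (j+i)+2 := by omega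
    have e' : j + 1 + i = (j+i)+1 := by omega
    rw [e, gam_succ]; rw [e'] at ih; rw [ih]
    exact clampc_of_nonpos (TT_zero _ _ (gam_mem _ _).1 (gam_mem _ _).2).le

theorem gam_absorb1 (θ : ℝ) (j : ℕ) (h : gam (j+1) θ = Real.pi/2) (i : ℕ) :
    gam (j+1+i) θ = Real.pi/2 := by
  induction i with
  | zero => exact h
  | succ i ih =>
    have e : j + 1 + (i+1) = (j+i)+2 := by omega
    have e' : j + 1 + i = (j+i)+1 := by omega
    rw [e, gam_succ]; rw [e'] at ih; rw [ih]
    exact clampc_of_ge (TT_top _ _ (gam_mem _ _).1 (gam_mem _ _).2).le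

theorem gam_back (θ : ℝ) (M : ℕ) (h0 : 0 < gam M θ) (h1 : gam M θ < Real.pi/2) (j : ℕ)
    (hj : 1 ≤ j) (hjM : j ≤ M) : 0 < gam j θ ∧ gam j θ < Real.pi/2 := by
  obtain ⟨j, rfl⟩ : ∃ i, j = i+1 := ⟨j-1, by omega⟩
  obtain ⟨i, rfl⟩ : ∃ i, M = j+1+i := ⟨M-(j+1), by omega⟩
  constructor
  · refine lt_of_le_of_ne (gam_mem _ _).1 fun h => ?_
    rw [gam_absorb0 θ j h.symm i] at h0; exact lt_irrefl _ h0
  · refine lt_of_le_of_ne (gam_mem _ _).2 fun h => ?_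
    rw [gam_absorb1 θ j h i] at h1; exact lt_irrefl _ h1

theorem gam_exists (M : ℕ) : ∃ θ, gam (M+1) θ = Real.pi/4 := by
  have hpi := Real.pi_pos
  have h0 : gam (M+1) 0 = 0 := by
    have := gam_absorb0 0 0 (by rw [gam_one]; exact clampc_of_nonpos le_rfl) M
    rwa [show 0 + 1 + M = M+1 by omega] at this
  have h1 : gam (M+1) (Real.pi/2) = Real.pi/2 := by
    have := gam_absorb1 (Real.pi/2) 0 (by rw [gam_one]; exact clampc_of_ge le_rfl) M
    rwa [show 0 + 1 + M = M+1 by omega] at this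
  have := intermediate_value_Icc (show (0:ℝ) ≤ Real.pi/2 by positivity)
    (gam_cont M).2.continuousOn
  rw [h0, h1] at this
  obtain ⟨θ, _, h⟩ := this (show Real.pi/4 ∈ Set.Icc 0 (Real.pi/2) from ⟨by positivity, by linarith⟩)
  exact ⟨θ, h⟩

def dd (θ : ℝ) : ℕ → ℝ
  | 0 => 0
  | 1 => Real.tan (θ/2)
  | (m+2) => dd θ (m+1) * Real.tan (gam (m+1) θ)

theorem dd_zero (θ : ℝ) : dd θ 0 = 0 := by rw [dd]
theorem dd_one (θ : ℝ) : dd θ 1 = Real.tan (θ/2) := by rw [dd]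
theorem dd_succ (θ : ℝ) (m : ℕ) : dd θ (m+2) = dd θ (m+1) * Real.tan (gam (m+1) θ) := by rw [dd]

theorem gam_good (θ : ℝ) (M : ℕ) (hM : 1 ≤ M)
    (h : ∀ j, 1 ≤ j → j ≤ M → 0 < gam j θ ∧ gam j θ < Real.pi/2) :
    (∀ m, 1 ≤ m → m ≤ M+1 → 0 < dd θ m) ∧ (∀ m, m + 1 < M + 1 → GP (dd θ) 0 m) ∧
    0 < θ ∧ θ < Real.pi/2 := by
  have hpi := Real.pi_pos
  have hθ : gam 1 θ = θ := by
    have := h 1 le_rfl hM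
    rw [gam_one] at this ⊢
    exact clampc_of_lt this.1 this.2
  have hθ0 : 0 < θ := by rw [← hθ]; exact (h 1 le_rfl hM).1
  have hθ1 : θ < Real.pi/2 := by rw [← hθ]; exact (h 1 le_rfl hM).2
  have pos : ∀ m, m + 1 ≤ M+1 → 0 < dd θ (m+1) := by
    intro m
    induction m with
    | zero => intro _; rw [dd_one]; exact Real.tan_pos_of_pos_of_lt_pi_div_two (by linarith) (by linarith)
    | succ m ih =>
      intro hm
      rw [dd_succ]
      have := h (m+1) (by omega) (by omega)
      exact mul_pos (ih (by omega)) (Real.tan_pos_of_pos_of_lt_pi_div_two this.1 this.2)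
  have hpos : ∀ m, 1 ≤ m → m ≤ M+1 → 0 < dd θ m := by
    intro m h1 h2
    obtain ⟨m, rfl⟩ : ∃ i, m = i+1 := ⟨m-1, by omega⟩
    exact pos m h2
  have he : ∀ j, j < M → gg (dd θ) 1 j = dd θ (j+1) *
      Real.tan ((Real.pi/2 + gam j θ - gam (j+1) θ)/2) := by
    intro j
    induction j with
    | zero =>
      intro _
      rw [gg_col0 _ (dd_zero θ), dd_one, gam_zero, hθ]
      have : (Real.pi/2+Real.pi/2-θ)/2 = Real.pi/2 - θ/2 := by ring
      rw [this, Real.tan_pi_div_two_sub, mul_inv_cancel₀]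
      · simp
      · exact (Real.tan_pos_of_pos_of_lt_pi_div_two (by linarith) (by linarith)).ne'
    | succ j ih =>
      intro hj
      have e := ih (by omega)
      have g1 := h (j+1) (by omega) (by omega)
      have g2 := h (j+2) (by omega) (by omega)
      have g0 := gam_mem j θ
      have hT : gam (j+2) θ = TT (j+1) (gam j θ) (gam (j+1) θ) := by
        rw [gam_succ] at g2 ⊢
        exact clampc_of_lt g2.1 g2.2
      have hb : (Real.pi/2 + gam (j+1) θ - gam (j+2) θ)/2 = (zz (j+1) (gam j θ) (gam (j+1) θ)).arg := by
        rw [hT, TT]; ring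
      rw [show j+1+1 = j+2 by rfl, hb, Complex.tan_arg, gg_step, e, dd_succ]
      have s1 : 0 < Real.sin (gam (j+1) θ) := Real.sin_pos_of_pos_of_lt_pi g1.1 (by linarith)
      have c1 : 0 < Real.cos (gam (j+1) θ) := Real.cos_pos_of_mem_Ioo ⟨by linarith, by linarith⟩
      have c2 : 0 < Real.cos ((Real.pi/2 + gam j θ - gam (j+1) θ)/2) :=
        Real.cos_pos_of_mem_Ioo ⟨by linarith, by linarith⟩
      have p := pos j (by omega)
      simp only [zz, gg_zero, dd_succ]
      rw [Real.tan_eq_sin_div_cos, Real.tan_eq_sin_div_cos]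
      push_cast
      generalize Real.sin (gam (j+1) θ) = s at *
      generalize Real.cos (gam (j+1) θ) = c at *
      generalize Real.cos ((Real.pi/2 + gam j θ - gam (j+1) θ)/2) = c' at *
      generalize Real.sin ((Real.pi/2 + gam j θ - gam (j+1) θ)/2) = s' at *
      field_simp
      ring
  refine ⟨hpos, ?_, hθ0, hθ1⟩
  intro m hm
  have e := he m (by omega)
  have g1 := h (m+1) (by omega) (by omega)
  have g0 := gam_mem m θ
  have g0' : 0 < gam m θ := by
    rcases Nat.eq_zero_or_pos m with h' | h'
    · subst h'; rw [gam_zero]; positivity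
    · exact (h m h' (by omega)).1
  have dm : dd θ m * Real.sin (gam m θ) = dd θ (m+1) * Real.cos (gam m θ) := by
    cases m with
    | zero => rw [gam_zero, dd_zero]; simp
    | succ m =>
      have g := h (m+1) (by omega) (by omega)
      have c1 : 0 < Real.cos (gam (m+1) θ) := Real.cos_pos_of_mem_Ioo ⟨by linarith, by linarith⟩
      rw [show m+1+1 = m+2 by rfl, dd_succ, Real.tan_eq_sin_div_cos]
      field_simp
  have dp := dd_succ θ m
  rw [Real.tan_eq_sin_div_cos] at dp e
  have s0 : 0 < Real.sin (gam m θ) := Real.sin_pos_of_pos_of_lt_pi g0' (by linarith)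
  have c1 : 0 < Real.cos (gam (m+1) θ) := Real.cos_pos_of_mem_Ioo ⟨by linarith, by linarith⟩
  have c2 : 0 < Real.cos ((Real.pi/2 + gam m θ - gam (m+1) θ)/2) :=
    Real.cos_pos_of_mem_Ioo ⟨by linarith, by linarith⟩
  have key : Real.cos ((gam (m+1) θ + (Real.pi/2 + gam m θ - gam (m+1) θ)/2) -
     (gam m θ - (Real.pi/2 + gam m θ - gam (m+1) θ)/2)) = 0 := by
    rw [show (gam (m+1) θ + (Real.pi/2 + gam m θ - gam (m+1) θ)/2) -
     (gam m θ - (Real.pi/2 + gam m θ - gam (m+1) θ)/2) = Real.pi/2 by ring, Real.cos_pi_div_two]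
  rw [Real.cos_sub, Real.cos_add, Real.cos_sub, Real.sin_add, Real.sin_sub] at key
  simp only [GP, gg_zero, zero_add]
  rw [e, dp]
  have dm' : dd θ m = dd θ (m+1) * Real.cos (gam m θ) / Real.sin (gam m θ) := by
    field_simp; exact dm
  rw [dm']
  generalize Real.sin (gam m θ) = s at *
  generalize Real.cos (gam m θ) = c at *
  generalize Real.sin (gam (m+1) θ) = s' at *
  generalize Real.cos (gam (m+1) θ) = c' at *
  generalize Real.cos ((Real.pi/2 + gam m θ - gam (m+1) θ)/2) = c2 at *
  generalize Real.sin ((Real.pi/2 + gam m θ - gam (m+1) θ)/2) = s2 at *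
  push_cast
  field_simp
  linear_combination ((m:ℝ)+1) * dd θ (m+1)^3 * key

theorem row1 (θ : ℝ) (j : ℕ)
    (h : ∀ i, 1 ≤ i → i ≤ 2*j+1 → 0 < gam i θ ∧ gam i θ < Real.pi/2) :
    (2*(j:ℝ)/(2*j+1)) ≤ Real.tan (θ/2) * Real.Wallis.W j ∧
      Real.tan (θ/2) * Real.Wallis.W j ≤ 1 := by
  obtain ⟨hpos, hG, h0, h1⟩ := gam_good θ (2*j+1) (by omega) h
  have P := gg_pos _ (dd_zero θ) _ hpos
  have E := gg_E _ (dd_zero θ) _ hpos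
  have Mn := gg_main _ (dd_zero θ) _ hpos hG
  have mono : ∀ k, k + 2 ≤ 2*j+2 → gg (dd θ) k 1 < gg (dd θ) (k+1) 1 := by
    intro k hk
    have e := E k 0 (by omega)
    rw [gg_col0 _ (dd_zero θ)] at e
    push_cast at e
    simp only [zero_add] at e
    have p1 := P k 1 (by omega) (by omega)
    have p2 := P k 2 (by omega) (by omega)
    have p3 := P (k+1) 1 (by omega) (by omega)
    by_contra hc
    push Not at hc
    have : ((k:ℝ)+1)*(gg (dd θ) (k+1) 1 * ((k:ℝ)+gg (dd θ) k 2)) =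
      ((k:ℝ)+1)*(gg (dd θ) k 1 * ((k:ℝ)+2+gg (dd θ) k 2)) := by linear_combination e
    have := mul_left_cancel₀ (by positivity) this
    have h3 : gg (dd θ) (k+1) 1 * ((k:ℝ)+gg (dd θ) k 2) ≤ gg (dd θ) k 1 * ((k:ℝ)+gg (dd θ) k 2) :=
      mul_le_mul_of_nonneg_right hc (by positivity)
    nlinarith
  have prod : ∀ k, k + 2 ≤ 2*j+2 → gg (dd θ) (k+1) 1 * gg (dd θ) k 1 = ((k:ℝ)+1)^2 := by
    intro k hk
    exact (Mn k).2.2 (by omega)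
  have val : ∀ i, i ≤ j → gg (dd θ) (2*i) 1 = Real.tan (θ/2) * ((2*i+1) * Real.Wallis.W i) := by
    intro i
    induction i with
    | zero => intro _; simp [gg_zero, dd_one, Real.Wallis.W]
    | succ i ih =>
      intro hi
      have v := ih (by omega)
      have a := prod (2*i) (by omega)
      have b := prod (2*i+1) (by omega)
      have p1 := P (2*i) 1 (by omega) (by omega)
      have p2 := P (2*i+1) 1 (by omega) (by omega)
      rw [show 2*(i+1) = 2*i+1+1 by ring, Real.Wallis.W_succ]
      have hb : gg (dd θ) (2*i+1+1) 1 = ((2*(i:ℝ)+2)/(2*i+1))^2 * gg (dd θ) (2*i) 1 := by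
        push_cast at a b
        have : gg (dd θ) (2*i+1) 1 ≠ 0 := p2.ne'
        apply mul_right_cancel₀ this
        rw [b]
        field_simp
        linear_combination -(2*(i:ℝ)+2)^2*a
      rw [hb, v]
      push_cast
      field_simp
      ring
  have v := val j le_rfl
  have m1 := mono (2*j) (by omega)
  have e1 := prod (2*j) (by omega)
  have p0 := P (2*j) 1 (by omega) (by omega)
  have u1 : gg (dd θ) (2*j) 1 ≤ 2*(j:ℝ)+1 := by
    push_cast at e1
    by_contra hc
    push Not at hc
    nlinarith
  have u0 : 2*(j:ℝ) ≤ gg (dd θ) (2*j) 1 := by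
    rcases Nat.eq_zero_or_pos j with hj | hj
    · subst hj; simpa using p0.le
    · obtain ⟨i, hi⟩ : ∃ i, 2*j = i+1 := ⟨2*j-1, by omega⟩
      have m2 := mono i (by omega)
      have e2 := prod i (by omega)
      have p2 := P i 1 (by omega) (by omega)
      have : 2*(j:ℝ) = (i:ℝ)+1 := by exact_mod_cast hi
      rw [this, hi]
      by_contra hc
      push Not at hc
      nlinarith
  rw [v] at u0 u1
  constructor
  · rw [div_le_iff₀ (by positivity)]; linarith
  · have : (0:ℝ) < 2*j+1 := by positivity
    nlinarith

theorem gam_star (j : ℕ) : 0 < gam (j+1) (2 * Real.arctan (2/Real.pi)) ∧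
    gam (j+1) (2 * Real.arctan (2/Real.pi)) < Real.pi/2 := by
  have hpi := Real.pi_pos
  choose θ hθ using gam_exists
  have good : ∀ M i, 1 ≤ i → i ≤ M+1 → 0 < gam i (θ M) ∧ gam i (θ M) < Real.pi/2 := by
    intro M i h1 h2
    exact gam_back (θ M) (M+1) (by rw [hθ]; positivity) (by rw [hθ]; linarith) i h1 h2
  have hr := fun j => row1 (θ (2*j)) j (good (2*j))
  have lim1 : Filter.Tendsto (fun j => Real.tan (θ (2*j)/2) * Real.Wallis.W j) Filter.atTop (nhds 1) := by
    refine tendsto_of_tendsto_of_tendsto_of_le_of_le ?_ tendsto_const_nhds (fun j => (hr j).1)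
      (fun j => (hr j).2)
    have h2 : Filter.Tendsto (fun j : ℕ => 1 - (1:ℝ)/(((2*j:ℕ):ℝ)+1)) Filter.atTop (nhds (1-0)) := by
      refine Filter.Tendsto.sub tendsto_const_nhds ?_
      exact (tendsto_one_div_add_atTop_nhds_zero_nat (𝕜 := ℝ)).comp
        (Filter.tendsto_id.const_mul_atTop' (by norm_num : 0 < 2))
    rw [sub_zero] at h2
    refine h2.congr fun j => ?_
    push_cast
    field_simp
    ring
  have lim2 : Filter.Tendsto (fun j => Real.tan (θ (2*j)/2)) Filter.atTop (nhds (2/Real.pi)) := by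
    have := lim1.div Real.Wallis.tendsto_W_nhds_pi_div_two (by positivity)
    rw [one_div_div] at this
    refine this.congr fun j => ?_
    have := Real.Wallis.W_pos j
    simp only [Pi.div_apply]
    field_simp
  have lim3 : Filter.Tendsto (fun j => θ (2*j)) Filter.atTop (nhds (2 * Real.arctan (2/Real.pi))) := by
    have := (Real.continuous_arctan.continuousAt.tendsto.comp lim2).const_mul 2
    refine this.congr fun j => ?_
    have g := (gam_good _ _ (by omega) (good (2*j))).2.2
    simp only [Function.comp]
    rw [Real.arctan_tan (by linarith) (by linarith)]; ring
  obtain ⟨θs, hs⟩ : ∃ θs, θs = 2 * Real.arctan (2/Real.pi) := ⟨_, rfl⟩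
  rw [← hs] at lim3 ⊢
  have cT := gam_cont_aux j (gam_cont j).1 (gam_cont j).2
  have limT := (cT.tendsto θs).comp lim3
  constructor
  · refine lt_of_le_of_ne (gam_mem _ _).1 fun h => ?_
    have hneg : TT (j+1) (gam j θs) (gam (j+1) θs) < 0 := by
      rw [← h]; exact TT_zero _ _ (gam_mem _ _).1 (gam_mem _ _).2
    have ev := limT.eventually (gt_mem_nhds hneg)
    obtain ⟨N, hN, hN2⟩ := (ev.and (Filter.eventually_ge_atTop (j+2))).exists
    have hz : gam (j+2) (θ (2*N)) = 0 := by
      rw [gam_succ]; exact clampc_of_nonpos (le_of_lt hN)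
    have := (good (2*N) (j+2) (by omega) (by omega)).1
    rw [hz] at this; exact lt_irrefl _ this
  · refine lt_of_le_of_ne (gam_mem _ _).2 fun h => ?_
    have hneg : Real.pi/2 < TT (j+1) (gam j θs) (gam (j+1) θs) := by
      rw [h]; exact TT_top _ _ (gam_mem _ _).1 (gam_mem _ _).2
    have ev := limT.eventually (lt_mem_nhds hneg)
    obtain ⟨N, hN, hN2⟩ := (ev.and (Filter.eventually_ge_atTop (j+2))).exists
    have hz : gam (j+2) (θ (2*N)) = Real.pi/2 := by
      rw [gam_succ]; exact clampc_of_ge (le_of_lt hN)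
    have := (good (2*N) (j+2) (by omega) (by omega)).2
    rw [hz] at this; exact lt_irrefl _ this

/-- radii exist -/
theorem exists_radii : ∃ g : ℕ → ℕ → ℝ, (∀ k m, 1 ≤ k + m → 0 < g k m) ∧ (∀ k, g k 0 = k) ∧
    g 0 1 = 2/Real.pi ∧ (∀ k, g (k+1) 1 * g k 1 = ((k:ℝ)+1)^2) ∧
    (∀ m, (g 0 (m+1)^2 - g 0 (m+2) * g 1 m) * (g 0 m + g 1 m) +
       (g 0 (m+1)^2 - g 0 m * g 1 m) * (g 0 (m+2) + g 1 m) = 0) ∧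
    (∀ k m, (g (k+1) (m+1)^2 - g (k+1) (m+2) * g k (m+2)) * (g (k+1) m + g (k+2) m) +
       (g (k+1) (m+1)^2 - g (k+1) m * g (k+2) m) * (g (k+1) (m+2) + g k (m+2)) = 0) := by
  have hpi := Real.pi_pos
  obtain ⟨θs, hs⟩ : ∃ θs, θs = 2 * Real.arctan (2/Real.pi) := ⟨_, rfl⟩
  have hg : ∀ M j, 1 ≤ j → j ≤ M → 0 < gam j θs ∧ gam j θs < Real.pi/2 := by
    intro M j h1 _
    obtain ⟨j, rfl⟩ : ∃ i, j = i+1 := ⟨j-1, by omega⟩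
    rw [hs]; exact gam_star j
  have good := fun M hM => gam_good θs M hM (hg M)
  have hpos : ∀ M m, 1 ≤ m → m ≤ M → 0 < dd θs m := fun M m h1 h2 =>
    (good (M+1) (by omega)).1 m h1 (by omega)
  have hG : ∀ M m, m + 1 < M → GP (dd θs) 0 m := fun M m h =>
    (good (M+1) (by omega)).2.1 m (by omega)
  have Mn := fun M => gg_main (dd θs) (dd_zero θs) M (hpos M) (hG M)
  refine ⟨gg (dd θs), ?_, gg_col0 _ (dd_zero θs), ?_, ?_, ?_, ?_⟩
  · intro k m h
    exact gg_pos _ (dd_zero θs) (k+m) (hpos _) k m h le_rfl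
  · rw [gg_zero, dd_one, hs, mul_div_cancel_left₀ _ (by norm_num), Real.tan_arctan]
  · intro k
    exact (Mn (k+2) k).2.2 (by omega)
  · intro m
    have := hG (m+2) m (by omega)
    simp only [GP] at this
    have h2 : ((m:ℝ)+1) * ((gg (dd θs) 0 (m+1)^2 - gg (dd θs) 0 (m+2) * gg (dd θs) 1 m) * (gg (dd θs) 0 m + gg (dd θs) 1 m) +
       (gg (dd θs) 0 (m+1)^2 - gg (dd θs) 0 m * gg (dd θs) 1 m) * (gg (dd θs) 0 (m+2) + gg (dd θs) 1 m)) = 0 := by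
      push_cast at this; linear_combination this
    exact (mul_eq_zero.mp h2).resolve_left (by positivity)
  · intro k m
    have := (Mn (k+m+3) k).2.1 m (by omega)
    simp only [SP] at this
    exact this

theorem exists_radii2 : ∃ R : ℕ → ℕ → ℝ, R 0 0 = 0 ∧
    (∀ n m, Even (n+m) → 1 ≤ n + m → 0 < R n m) ∧
    (∀ k, R (2*k) 0 = k) ∧ (∀ k, R 0 (2*k) = k) ∧ R 1 1 = 2/Real.pi ∧
    (∀ k, R (2*k+3) 1 * R (2*k+1) 1 = ((k:ℝ)+1)^2) ∧
    (∀ k, R 1 (2*k+3) * R 1 (2*k+1) = ((k:ℝ)+1)^2) ∧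
    (∀ n m, Even (n+m) →
      (R (n+1) (m+1)^2 - R (n+2) (m+2) * R n (m+2)) * (R n m + R (n+2) m) +
      (R (n+1) (m+1)^2 - R n m * R (n+2) m) * (R (n+2) (m+2) + R n (m+2)) = 0) := by
  obtain ⟨g, gp, g0, g1, gb, gd, gs⟩ := exists_radii
  obtain ⟨R, hR⟩ : ∃ R : ℕ → ℕ → ℝ, R = fun n m => if m ≤ n then g ((n-m)/2) m else g ((m-n)/2) n :=
    ⟨_, rfl⟩
  have R1 : ∀ n m k, n = m + 2*k → R n m = g k m := by
    intro n m k h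
    subst h
    simp only [hR]
    rw [if_pos (by omega)]
    congr 1; omega
  have R2 : ∀ n m k, m = n + 2*k → R n m = g k n := by
    intro n m k h
    rcases Nat.eq_zero_or_pos k with hk | hk
    · subst hk; simp at h; subst h; exact R1 _ _ _ (by omega)
    subst h
    simp only [hR]
    rw [if_neg (by omega)]
    congr 1; omega
  have cs : ∀ n m : ℕ, Even (n+m) → (∃ k, n = m + 2*k) ∨ (∃ k, m = n + 2*(k+1)) := by
    intro n m ⟨r, hr⟩
    by_cases h : m ≤ n
    · left; exact ⟨(n-m)/2, by omega⟩
    · right; exact ⟨(m-n)/2-1, by omega⟩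
  refine ⟨R, ?_, ?_, ?_, ?_, ?_, ?_, ?_, ?_⟩
  · rw [R1 0 0 0 (by omega), g0]; simp
  · intro n m he h
    rcases cs n m he with ⟨k, hk⟩ | ⟨k, hk⟩
    · rw [R1 _ _ k hk]; exact gp _ _ (by omega)
    · rw [R2 _ _ _ hk]; exact gp _ _ (by omega)
  · intro k; rw [R1 _ _ k (by omega), g0]
  · intro k; rw [R2 _ _ k (by omega), g0]
  · rw [R1 _ _ 0 (by omega), g1]
  · intro k; rw [R1 _ _ (k+1) (by omega), R1 _ _ k (by omega)]; exact gb k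
  · intro k; rw [R2 _ _ (k+1) (by omega), R2 _ _ k (by omega)]; exact gb k
  · intro n m he
    rcases cs n m he with ⟨k, hk⟩ | ⟨k, hk⟩
    · cases k with
      | zero =>
        rw [R1 (n+1) (m+1) 0 (by omega), R1 (n+2) (m+2) 0 (by omega), R2 n (m+2) 1 (by omega),
          R1 n m 0 (by omega), R1 (n+2) m 1 (by omega)]
        have := gd m
        have hnm : n = m := by omega
        rw [hnm]
        exact this
      | succ k =>
        rw [R1 (n+1) (m+1) (k+1) (by omega), R1 (n+2) (m+2) (k+1) (by omega), R1 n (m+2) k (by omega),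
          R1 n m (k+1) (by omega), R1 (n+2) m (k+2) (by omega)]
        exact gs k m
    · rw [R2 (n+1) (m+1) (k+1) (by omega), R2 (n+2) (m+2) (k+1) (by omega), R2 n (m+2) (k+2) (by omega),
          R2 n m (k+1) (by omega), R2 (n+2) m k (by omega)]
      linear_combination gs k n

theorem axis_seq (u : ℕ → ℂ) (h0 : u 0 = 0) (h1 : u 1 = 0) (h2 : u 2 = 1)
    (hr : ∀ n, 2 * u (n+1) * (u (n+2) - u n) =
      2 * ((n:ℂ)+1) * ((u (n+2) - u (n+1)) * (u (n+1) - u n))) (k : ℕ) :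
    u (2*k) = (k:ℂ)^2 ∧ u (2*k+1) = k*((k:ℂ)+1) := by
  have main : ∀ k : ℕ, u (2*k+2) = ((k:ℂ)+1)^2 ∧ u (2*k+3) = ((k:ℂ)+1)*((k:ℂ)+2) := by
    have second : ∀ k : ℕ, u (2*k+1) = k*((k:ℂ)+1) → u (2*k+2) = ((k:ℂ)+1)^2 →
        u (2*k+3) = ((k:ℂ)+1)*((k:ℂ)+2) := by
      intro k a b
      have := hr (2*k+1)
      rw [show 2*k+1+1 = 2*k+2 by ring, show 2*k+1+2=2*k+3 by ring, a, b] at this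
      push_cast at this
      have hk : ((k:ℂ)+1)^2 ≠ 0 := pow_ne_zero _ (by exact_mod_cast Nat.succ_ne_zero k)
      apply mul_left_cancel₀ hk
      linear_combination -this/2
    intro k
    induction k with
    | zero =>
      have a : u (2*0+2) = (((0:ℕ):ℂ)+1)^2 := by simpa using h2
      exact ⟨a, second 0 (by simpa using h1) a⟩
    | succ k ih =>
      have a : u (2*(k+1)+2) = (((k+1:ℕ):ℂ)+1)^2 := by
        have := hr (2*k+2)
        rw [show 2*k+2+1 = 2*k+3 by ring, show 2*k+2+2=2*(k+1)+2 by ring, ih.1, ih.2] at this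
        push_cast at this ⊢
        have hk : ((k:ℂ)+1)^2 ≠ 0 := pow_ne_zero _ (by exact_mod_cast Nat.succ_ne_zero k)
        apply mul_left_cancel₀ hk
        linear_combination -this/2
      refine ⟨a, second (k+1) ?_ a⟩
      rw [show 2*(k+1)+1 = 2*k+3 by ring, ih.2]; push_cast; ring
  cases k with
  | zero => simp [h0, h1]
  | succ k =>
    have := main k
    rw [show 2*(k+1) = 2*k+2 by ring, this.1, show 2*k+2+1=2*k+3 by ring, this.2]
    push_cast
    constructor <;> ring

theorem quadE (h v hp vp : ℂ) (R R' : ℝ) (hR : 0 < R) (hh : h ≠ 0)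
    (cl : h + vp = v + hp) (q : h*hp + v*vp = 0)
    (e : v*((R:ℂ) - I*R') = h*((R:ℂ)+I*R')) :
    (R:ℂ)*vp = I*R'*h ∧ (R:ℂ)*hp = -(I*R'*v) ∧ vp*((R':ℂ)-I*R) = hp*((R':ℂ)+I*R) := by
  have hRc : (R:ℂ) ≠ 0 := by exact_mod_cast hR.ne'
  have hI : I^2 = -1 := Complex.I_sq
  have h1 : hp*(h+v) = v*(h-v) := by linear_combination q + (-v)*cl
  have h2 : vp*(h+v) = h*(v-h) := by linear_combination q + h*cl
  have s : (h+v)*((R:ℂ) - I*R') = 2*R*h := by linear_combination e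
  have t : (h-v)*((R:ℂ) - I*R') = -(2*I*R'*h) := by linear_combination -e
  have a : (R:ℂ)*vp = I*R'*h := by
    apply mul_left_cancel₀ hh
    linear_combination -vp*s/2 + ((R:ℂ) - I*R')/2*h2 - h*t/2
  have b : (R:ℂ)*hp = -(I*R'*v) := by
    apply mul_left_cancel₀ hh
    linear_combination -hp*s/2 + ((R:ℂ) - I*R')/2*h1 + v*t/2
  refine ⟨a, b, ?_⟩
  apply mul_left_cancel₀ hRc
  linear_combination ((R':ℂ)-I*R)*a - ((R':ℂ)+I*R)*b + R'*I*I*e + R'^2*I*(h+v)*hI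

theorem quadO (h v hp vp : ℂ) (a b : ℝ) (ha : 0 < a) (hh : h ≠ 0)
    (cl : h + vp = v + hp) (q : h*hp + v*vp = 0)
    (e : v*(a:ℂ) = I*h*b) :
    vp*((a:ℂ)+I*b) = -(h*((a:ℂ)-I*b)) ∧ hp*((a:ℂ)+I*b) = v*((a:ℂ)-I*b)
     ∧ hp*((b:ℂ)-I*a) = -(v*((b:ℂ)+I*a)) := by
  have hac : (a:ℂ) ≠ 0 := by exact_mod_cast ha.ne'
  have hI : I^2 = -1 := Complex.I_sq
  have h1 : hp*(h+v) = v*(h-v) := by linear_combination q + (-v)*cl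
  have h2 : vp*(h+v) = h*(v-h) := by linear_combination q + h*cl
  have B : hp*((a:ℂ)+I*b) = v*((a:ℂ)-I*b) := by
    apply mul_left_cancel₀ hh
    linear_combination a*h1 - (hp+v)*e
  refine ⟨?_, B, ?_⟩
  · apply mul_left_cancel₀ hh
    linear_combination a*h2 + (h - vp)*e
  · linear_combination -I*B + (hp+v)*b*hI

theorem evenStep (h v h' v' : ℂ) (R A B C D : ℝ) (hR : 0 < R)
    (a : v*((R:ℂ)+I*B) = -(h'*((R:ℂ)-I*B)))
    (b : h*((R:ℂ)-I*D) = -(v'*((R:ℂ)+I*D)))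
    (c : v'*((R:ℂ)-I*C) = h'*((R:ℂ)+I*C))
    (S : (R^2-A*B)*(C+D)+(R^2-C*D)*(A+B) = 0) :
    v*((R:ℂ)-I*A) = h*((R:ℂ)+I*A) := by
  have hI : I^2 = -1 := Complex.I_sq
  have nz : ∀ X : ℝ, (R:ℂ)+I*X ≠ 0 := by
    intro X hX
    have := congrArg Complex.re hX
    simp at this
    exact hR.ne' this
  have S' : ((R:ℂ)^2-A*B)*(C+D)+((R:ℂ)^2-C*D)*(A+B) = 0 := by exact_mod_cast S
  have hP : ((R:ℂ)+I*A)*((R:ℂ)+I*B)*((R:ℂ)+I*C)*((R:ℂ)+I*D) =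
      ((R:ℂ)-I*A)*((R:ℂ)-I*B)*((R:ℂ)-I*C)*((R:ℂ)-I*D) := by
    linear_combination 2*I*R*S' + 2*R*I*((A:ℂ)*B*C+A*B*D+A*C*D+B*C*D)*hI
  have hne : ((R:ℂ)+I*A)*((R:ℂ)+I*B)*((R:ℂ)+I*C)*((R:ℂ)+I*D) ≠ 0 :=
    mul_ne_zero (mul_ne_zero (mul_ne_zero (nz _) (nz _)) (nz _)) (nz _)
  have ch : v*(((R:ℂ)+I*B)*((R:ℂ)+I*C)*((R:ℂ)+I*D)) =
      h*(((R:ℂ)-I*B)*((R:ℂ)-I*C)*((R:ℂ)-I*D)) := by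
    linear_combination ((R:ℂ)+I*C)*((R:ℂ)+I*D)*a - ((R:ℂ)-I*B)*((R:ℂ)-I*C)*b +
      ((R:ℂ)-I*B)*((R:ℂ)+I*D)*c
  apply mul_left_cancel₀ hne
  linear_combination ((R:ℂ)+I*A)*((R:ℂ)-I*A)*ch - h*((R:ℂ)+I*A)*hP

theorem oddStep (h v h' v' : ℂ) (r1 r2 r3 r4 : ℝ) (p3 : 0 < r3) (p4 : 0 < r4)
    (a : (r3:ℂ)*v = I*r2*h') (b : (r4:ℂ)*h = -(I*r1*v'))
    (c : v'*(r3:ℂ) = I*h'*r4) :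
    v*(r1:ℂ) = I*h*r2 := by
  have hI : I^2 = -1 := Complex.I_sq
  have e3 : (r3:ℂ) ≠ 0 := by exact_mod_cast p3.ne'
  have e4 : (r4:ℂ) ≠ 0 := by exact_mod_cast p4.ne'
  apply mul_left_cancel₀ (mul_ne_zero e3 e4)
  linear_combination r1*r4*a - I*r2*r3*b - r1*r2*c + r1*r2*r3*v'*hI

/-- the other two edges for odd base -/
theorem quadO2 (h v hp vp : ℂ) (a b : ℝ) (ha : 0 < a)
    (e : v*(a:ℂ) = I*h*b) 
    (x : vp*((a:ℂ)+I*b) = -(h*((a:ℂ)-I*b))) (y : hp*((a:ℂ)+I*b) = v*((a:ℂ)-I*b)) :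
    vp*(b:ℂ) = I*hp*a := by
  have hI : I^2 = -1 := Complex.I_sq
  have nz : (a:ℂ)+I*b ≠ 0 := by
    intro hX
    have := congrArg Complex.re hX
    simp at this
    exact ha.ne' this
  apply mul_left_cancel₀ nz
  linear_combination b*x - I*a*y - I*((a:ℂ)-I*b)*e - ((a:ℂ)-I*b)*h*b*hI

def crs (a b : ℂ) : ℝ := a.re*b.im - a.im*b.re

theorem crossE (h v hp vp : ℂ) (R R' : ℝ) (hR : 0 < R) (hR' : 0 < R')
    (e : v*((R:ℂ) - I*R') = h*((R:ℂ)+I*R'))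
    (a : (R:ℂ)*vp = I*R'*h) (b : (R:ℂ)*hp = -(I*R'*v)) :
    0 ≤ crs h v ∧ 0 ≤ crs h vp ∧ 0 ≤ crs hp v ∧ 0 ≤ crs hp vp := by
  rw [Complex.ext_iff] at e a b
  simp at e a b
  obtain ⟨e1, e2⟩ := e
  obtain ⟨a1, a2⟩ := a
  obtain ⟨b1, b2⟩ := b
  have k1 : (R^2+R'^2) * crs h v = 2*R*R'*(h.re^2+h.im^2) := by
    unfold crs
    linear_combination h.re*(R*e2+R'*e1) - h.im*(R*e1 - R'*e2)
  have k2 : R * crs h vp = R'*(h.re^2+h.im^2) := by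
    unfold crs; linear_combination h.re*a2 - h.im*a1
  have k3 : R * crs hp v = R'*(v.re^2+v.im^2) := by
    unfold crs; linear_combination v.im*b1 - v.re*b2
  have k4 : R^2 * crs hp vp = R'^2 * crs h v := by
    unfold crs; linear_combination R*vp.im*b1 - R*vp.re*b2 + R'*v.im*a2 + R'*v.re*a1
  have n1 : 0 ≤ crs h v := nonneg_of_mul_nonneg_right (by rw [k1]; positivity) (show 0 < R^2+R'^2 by positivity)
  refine ⟨n1, ?_, ?_, ?_⟩
  · exact nonneg_of_mul_nonneg_right (by rw [k2]; positivity) hR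
  · exact nonneg_of_mul_nonneg_right (by rw [k3]; positivity) hR
  · exact nonneg_of_mul_nonneg_right (by rw [k4]; positivity) (show 0 < R^2 by positivity)

theorem crossO (h v hp vp : ℂ) (a b : ℝ) (ha : 0 < a) (hb : 0 < b)
    (e : v*(a:ℂ) = I*h*b) 
    (x : vp*((a:ℂ)+I*b) = -(h*((a:ℂ)-I*b))) (y : hp*((a:ℂ)+I*b) = v*((a:ℂ)-I*b))
    (z : vp*(b:ℂ) = I*hp*a) :
    0 ≤ crs h v ∧ 0 ≤ crs h vp ∧ 0 ≤ crs hp v ∧ 0 ≤ crs hp vp := by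
  rw [Complex.ext_iff] at e x y z
  simp at e x y z
  obtain ⟨e1, e2⟩ := e
  obtain ⟨x1, x2⟩ := x
  obtain ⟨y1, y2⟩ := y
  obtain ⟨z1, z2⟩ := z
  have k1 : a * crs h v = b*(h.re^2+h.im^2) := by
    unfold crs; linear_combination h.re*e2 - h.im*e1
  have k4 : b * crs hp vp = a*(hp.re^2+hp.im^2) := by
    unfold crs; linear_combination hp.re*z2 - hp.im*z1
  have k2 : (a^2+b^2) * crs h vp = 2*a*b*(h.re^2+h.im^2) := by
    unfold crs
    linear_combination (a*h.re - b*h.im)*x2 - (a*h.im + b*h.re) * x1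
  have k3 : (a^2+b^2) * crs hp v = 2*a*b*(v.re^2+v.im^2) := by
    unfold crs
    linear_combination v.im*(a*y1+b*y2) - v.re*(a*y2-b*y1)
  refine ⟨?_, ?_, ?_, ?_⟩
  · exact nonneg_of_mul_nonneg_right (by rw [k1]; positivity) ha
  · exact nonneg_of_mul_nonneg_right (by rw [k2]; positivity) (show 0 < a^2+b^2 by positivity)
  · exact nonneg_of_mul_nonneg_right (by rw [k3]; positivity) (show 0 < a^2+b^2 by positivity)
  · exact nonneg_of_mul_nonneg_right (by rw [k4]; positivity) hb

theorem sep_line (p e : ℂ) (he : e ≠ 0) (S1 S2 : Set ℂ) (h1 : ∀ x ∈ S1, 0 ≤ crs e (x-p))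
    (h2 : ∀ x ∈ S2, crs e (x-p) ≤ 0) :
    Disjoint (interior (convexHull ℝ S1)) (interior (convexHull ℝ S2)) := by
  have c1 : convexHull ℝ S1 ⊆ {x | 0 ≤ crs e (x-p)} := by
    refine convexHull_min h1 ?_
    intro x hx y hy s t hs ht hst
    simp only [Set.mem_ofPred_eq, crs, Complex.sub_re, Complex.sub_im] at hx hy ⊢
    simp
    have : s = 1 - t := by linarith
    subst this
    nlinarith [mul_nonneg hs hx, mul_nonneg ht hy]
  have c2 : convexHull ℝ S2 ⊆ {x | crs e (x-p) ≤ 0} := by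
    refine convexHull_min h2 ?_
    intro x hx y hy s t hs ht hst
    simp only [Set.mem_ofPred_eq, crs, Complex.sub_re, Complex.sub_im] at hx hy ⊢
    simp
    have : s = 1 - t := by linarith
    subst this
    nlinarith [mul_nonneg hs (neg_nonneg.mpr hx), mul_nonneg ht (neg_nonneg.mpr hy)]
  rw [Set.disjoint_left]
  intro x hx1 hx2
  have a := c1 (interior_subset hx1)
  have lim : Filter.Tendsto (fun t : ℝ => x + (t:ℂ)*(I*e)) (nhdsWithin 0 (Set.Ioi 0)) (nhds x) := by
    have : Continuous (fun t : ℝ => x + (t:ℂ)*(I*e)) := by fun_prop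
    have := this.tendsto 0
    simp only [Complex.ofReal_zero, zero_mul, add_zero] at this
    exact this.mono_left nhdsWithin_le_nhds
  have ev := lim.eventually (isOpen_interior.mem_nhds hx2)
  obtain ⟨t, ht, ht0⟩ := (ev.and self_mem_nhdsWithin).exists
  have b := c2 (interior_subset ht)
  simp only [Set.mem_ofPred_eq, crs, Set.mem_Ioi] at a b ht0
  simp at b
  have hpos : 0 < e.re^2+e.im^2 := by
    have := Complex.normSq_pos.mpr he
    rw [Complex.normSq_apply] at this; nlinarith
  simp at a
  nlinarith [mul_pos ht0 hpos]

def PP (H V : ℕ → ℕ → ℂ) (R : ℕ → ℕ → ℝ) (n m : ℕ) : Prop :=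
  H n m ≠ 0 ∧ V n m ≠ 0 ∧
  (Even (n+m) → V n m*((R n m:ℂ) - I*R (n+1) (m+1)) = H n m*((R n m:ℂ)+I*R (n+1) (m+1))) ∧
  (¬ Even (n+m) → V n m*(R (n+1) m:ℂ) = I*H n m*(R n (m+1)))

theorem nzc (a b : ℝ) (ha : 0 < a) : (a:ℂ)+I*b ≠ 0 ∧ (a:ℂ)-I*b ≠ 0 := by
  constructor <;>
  · intro hX
    have := congrArg Complex.re hX
    simp at this
    exact ha.ne' this

theorem edgesE {H V : ℕ → ℕ → ℂ} {R : ℕ → ℕ → ℝ} (n m : ℕ) (he : Even (n+m)) (h1 : 1 ≤ n+m)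
    (pos : ∀ n m, Even (n+m) → 1 ≤ n+m → 0 < R n m)
    (cl : ∀ n m, H n m + V (n+1) m = V n m + H n (m+1))
    (q : ∀ n m, H n m * H n (m+1) + V n m * V (n+1) m = 0)
    (p : PP H V R n m) :
    (R n m:ℂ)*V (n+1) m = I*R (n+1) (m+1)*H n m ∧
    (R n m:ℂ)*H n (m+1) = -(I*R (n+1) (m+1)*V n m) ∧
    V (n+1) m*((R (n+1) (m+1):ℂ)-I*R n m) = H n (m+1)*((R (n+1) (m+1):ℂ)+I*R n m) :=
  quadE _ _ _ _ _ _ (pos n m he h1) p.1 (cl n m) (q n m) (p.2.2.1 he)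

theorem edgesO {H V : ℕ → ℕ → ℂ} {R : ℕ → ℕ → ℝ} (n m : ℕ) (he : ¬ Even (n+m))
    (pos : ∀ n m, Even (n+m) → 1 ≤ n+m → 0 < R n m)
    (cl : ∀ n m, H n m + V (n+1) m = V n m + H n (m+1))
    (q : ∀ n m, H n m * H n (m+1) + V n m * V (n+1) m = 0)
    (p : PP H V R n m) :
    V (n+1) m*((R (n+1) m:ℂ)+I*R n (m+1)) = -(H n m*((R (n+1) m:ℂ)-I*R n (m+1))) ∧
    H n (m+1)*((R (n+1) m:ℂ)+I*R n (m+1)) = V n m*((R (n+1) m:ℂ)-I*R n (m+1)) ∧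
    H n (m+1)*((R n (m+1):ℂ)-I*R (n+1) m) = -(V n m*((R n (m+1):ℂ)+I*R (n+1) m)) ∧
    V (n+1) m*(R n (m+1):ℂ) = I*H n (m+1)*R (n+1) m := by
  have pa : 0 < R (n+1) m := pos _ _ (by grind) (by omega)
  have e := p.2.2.2 he
  obtain ⟨x, y, z⟩ := quadO _ _ _ _ _ _ pa p.1 (cl n m) (q n m) e
  exact ⟨x, y, z, quadO2 _ _ _ _ _ _ pa e x y⟩

theorem edgesNZ {H V : ℕ → ℕ → ℂ} {R : ℕ → ℕ → ℝ} (n m : ℕ) (h1 : 1 ≤ n+m)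
    (pos : ∀ n m, Even (n+m) → 1 ≤ n+m → 0 < R n m)
    (cl : ∀ n m, H n m + V (n+1) m = V n m + H n (m+1))
    (q : ∀ n m, H n m * H n (m+1) + V n m * V (n+1) m = 0)
    (p : PP H V R n m) : V (n+1) m ≠ 0 ∧ H n (m+1) ≠ 0 := by
  by_cases he : Even (n+m)
  · obtain ⟨a, b, -⟩ := edgesE n m he h1 pos cl q p
    have p' : (R (n+1) (m+1):ℂ) ≠ 0 := by
      exact_mod_cast (pos (n+1) (m+1) (by grind) (by omega)).ne'
    constructor
    · intro h0
      rw [h0, mul_zero] at a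
      exact mul_ne_zero (mul_ne_zero I_ne_zero p') p.1 a.symm
    · intro h0
      rw [h0, mul_zero] at b
      exact neg_ne_zero.mpr (mul_ne_zero (mul_ne_zero I_ne_zero p') p.2.1) b.symm
  · obtain ⟨a, b, -⟩ := edgesO n m he pos cl q p
    have pa : 0 < R (n+1) m := pos _ _ (by grind) (by omega)
    have nz := (nzc (R (n+1) m) (R n (m+1)) pa).2
    constructor
    · intro h0
      rw [h0, zero_mul] at a
      exact neg_ne_zero.mpr (mul_ne_zero p.1 nz) a.symm
    · intro h0
      rw [h0, zero_mul] at b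
      exact mul_ne_zero p.2.1 nz b.symm

theorem axisEven (h v : ℂ) (R A B : ℝ) (hB : 0 < B) (hAB : A*B = R^2)
    (x : v*((R:ℂ)+I*B) = -(h*((R:ℂ)-I*B))) : v*((R:ℂ)-I*A) = h*((R:ℂ)+I*A) := by
  have hI : I^2 = -1 := Complex.I_sq
  have k : (A:ℂ)*B = R^2 := by exact_mod_cast hAB
  have b : (B:ℂ) ≠ 0 := by exact_mod_cast hB.ne'
  apply mul_left_cancel₀ b
  linear_combination (-I*R)*x - I*(v+h)*k + (v-h)*R*B*hI

theorem axisEven2 (h v : ℂ) (R A B : ℝ) (hB : 0 < B) (hAB : A*B = R^2)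
    (x : h*((R:ℂ)-I*B) = -(v*((R:ℂ)+I*B))) : v*((R:ℂ)-I*A) = h*((R:ℂ)+I*A) := by
  have hI : I^2 = -1 := Complex.I_sq
  have k : (A:ℂ)*B = R^2 := by exact_mod_cast hAB
  have b : (B:ℂ) ≠ 0 := by exact_mod_cast hB.ne'
  apply mul_left_cancel₀ b
  linear_combination (-I*R)*x - I*(v+h)*k + (v-h)*R*B*hI

theorem PP_all (H V : ℕ → ℕ → ℂ) (R : ℕ → ℕ → ℝ)
    (R00 : R 0 0 = 0)
    (pos : ∀ n m, Even (n+m) → 1 ≤ n+m → 0 < R n m)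
    (Rx : ∀ k, R (2*k) 0 = k) (Ry : ∀ k, R 0 (2*k) = k)
    (Rx1 : ∀ k : ℕ, R (2*k+3) 1 * R (2*k+1) 1 = ((k:ℝ)+1)^2)
    (Ry1 : ∀ k : ℕ, R 1 (2*k+3) * R 1 (2*k+1) = ((k:ℝ)+1)^2)
    (Rs : ∀ n m, Even (n+m) → (R (n+1) (m+1)^2 - R (n+2) (m+2) * R n (m+2)) * (R n m + R (n+2) m)
      + (R (n+1) (m+1)^2 - R n m * R (n+2) m) * (R (n+2) (m+2) + R n (m+2)) = 0)
    (cl : ∀ n m, H n m + V (n+1) m = V n m + H n (m+1))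
    (q : ∀ n m, H n m * H n (m+1) + V n m * V (n+1) m = 0)
    (Hx : ∀ k : ℕ, H (2*k) 0 = k) (Hx1 : ∀ k : ℕ, H (2*k+1) 0 = k+1)
    (Vy : ∀ k : ℕ, V 0 (2*k) = -k) (Vy1 : ∀ k : ℕ, V 0 (2*k+1) = -(k+1))
    (V10 : V 1 0 = I*R 1 1) (H01 : H 0 1 = I*R 1 1) :
    ∀ s n m, n + m = s → 1 ≤ s → PP H V R n m := by
  have hI : I^2 = -1 := Complex.I_sq
  have r11 : (R 1 1:ℂ) ≠ 0 := by exact_mod_cast (pos 1 1 (by decide) (by omega)).ne'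
  have kne : ∀ k : ℕ, (k:ℂ)+1 ≠ 0 := fun k => by exact_mod_cast Nat.succ_ne_zero k
  intro s
  induction s using Nat.strong_induction_on with
  | _ s ih =>
  intro n m hs h1
  have IH : ∀ n m, n+m < s → 1 ≤ n+m → PP H V R n m := fun n m a b => ih _ a n m rfl b
  have EE := fun n m he h1 p => edgesE (H := H) (V := V) (R := R) n m he h1 pos cl q p
  have EO := fun n m he p => edgesO (H := H) (V := V) (R := R) n m he pos cl q p
  have NZ := fun n m h1 p => edgesNZ (H := H) (V := V) (R := R) n m h1 pos cl q p
  rcases n with _ | n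
  · -- axis n = 0
    rcases Nat.even_or_odd' m with ⟨k, rfl | rfl⟩
    · rcases k with _ | k
      · omega
      · have p := IH 0 (2*k+1) (by omega) (by omega)
        have nz := (NZ 0 (2*k+1) (by omega) p).2
        have ne : ¬ Even (0+(2*k+1)) := by grind
        obtain ⟨-, -, z, -⟩ := EO 0 (2*k+1) ne p
        rw [show 2*k+1+1 = 2*(k+1) by ring, show 0+1=1 by rfl] at *
        have vv : V 0 (2*(k+1)) = V 0 (2*k+1) := by
          rw [Vy, Vy1]; push_cast; ring
        refine ⟨nz, by rw [vv]; exact p.2.1, fun _ => ?_, fun hh => absurd (by grind) hh⟩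
        refine axisEven2 _ _ _ _ (R 1 (2*k+1)) (pos _ _ (by grind) (by omega)) ?_ ?_
        · rw [Ry, show 2*(k+1)+1 = 2*k+3 by ring, Ry1]; push_cast; ring
        · rw [vv]; exact z
    · rcases k with _ | k
      · have hv := Vy1 0
        have ry := Ry 1
        simp only [Nat.mul_zero, Nat.zero_add, Nat.cast_zero, zero_add, mul_one, Nat.cast_one] at hv ry ⊢
        refine ⟨by rw [H01]; exact mul_ne_zero I_ne_zero r11, by rw [hv]; simp,
          fun hh => absurd hh (by decide), fun _ => ?_⟩
        simp only [zero_add, Nat.reduceAdd]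
        rw [hv, H01, ry]
        push_cast
        linear_combination -(R 1 1:ℂ)*hI
      · have p := IH 0 (2*(k+1)) (by omega) (by omega)
        have nz := (NZ 0 (2*(k+1)) (by omega) p).2
        obtain ⟨-, y, -⟩ := EE 0 (2*(k+1)) (by grind) (by omega) p
        rw [Ry, Vy] at y
        push_cast at y
        have hh : H 0 (2*(k+1)+1) = I*R (0+1) (2*(k+1)+1) := by
          apply mul_left_cancel₀ (kne k)
          linear_combination y
        refine ⟨nz, ?_, fun hh => absurd hh (by grind), fun _ => ?_⟩
        · rw [Vy1]; exact neg_ne_zero.mpr (kne _)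
        · rw [hh, Vy1, show 2*(k+1)+1+1 = 2*(k+2) by ring, Ry]
          push_cast
          linear_combination -((k:ℂ)+2)*(R (0+1) (2*(k+1)+1):ℂ)*hI
  · rcases m with _ | m
    · rcases Nat.even_or_odd' (n+1) with ⟨k, hk | hk⟩
      · rcases k with _ | k
        · omega
        · obtain rfl : n = 2*k+1 := by omega
          have p := IH (2*k+1) 0 (by omega) (by omega)
          have nz := (NZ (2*k+1) 0 (by omega) p).1
          have ne : ¬ Even ((2*k+1)+0) := by grind
          obtain ⟨z, -⟩ := EO (2*k+1) 0 ne p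
          rw [show 2*k+1+1 = 2*(k+1) by ring, show 0+1=1 by rfl] at *
          have vv : H (2*(k+1)) 0 = H (2*k+1) 0 := by
            rw [Hx, Hx1]; push_cast; ring
          refine ⟨by rw [vv]; exact p.1, nz, fun _ => ?_, fun hh => absurd (by grind) hh⟩
          refine axisEven _ _ _ _ (R (2*k+1) 1) (pos _ _ (by grind) (by omega)) ?_ ?_
          · rw [Rx, show 2*(k+1)+1 = 2*k+3 by ring, Rx1]; push_cast; ring
          · rw [vv]; exact z
      · obtain rfl : n = 2*k := by omega
        rcases k with _ | k
        · have hv := Hx1 0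
          have ry := Rx 1
          simp only [Nat.mul_zero, Nat.zero_add, Nat.cast_zero, zero_add, mul_one, Nat.cast_one] at hv ry ⊢
          refine ⟨by rw [hv]; simp, by rw [V10]; exact mul_ne_zero I_ne_zero r11,
            fun hh => absurd hh (by decide), fun _ => ?_⟩
          simp only [zero_add, Nat.reduceAdd]
          rw [hv, V10, ry]
          push_cast
          ring
        · have p := IH (2*(k+1)) 0 (by omega) (by omega)
          have nz := (NZ (2*(k+1)) 0 (by omega) p).1
          obtain ⟨y, -⟩ := EE (2*(k+1)) 0 (by grind) (by omega) p
          rw [Rx, Hx] at y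
          push_cast at y
          have hh : V (2*(k+1)+1) 0 = I*R (2*(k+1)+1) (0+1) := by
            apply mul_left_cancel₀ (kne k)
            linear_combination y
          refine ⟨?_, nz, fun hh => absurd hh (by grind), fun _ => ?_⟩
          · rw [Hx1]; exact kne _
          · rw [hh, Hx1, show 2*(k+1)+1+1 = 2*(k+2) by ring, Rx]
            push_cast
            ring
    · have pa := IH n (m+1) (by omega) (by omega)
      have pb := IH (n+1) m (by omega) (by omega)
      refine ⟨(NZ (n+1) m (by omega) pb).2, (NZ n (m+1) (by omega) pa).1, fun he => ?_, fun he => ?_⟩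
      · obtain ⟨a, -⟩ := EO n (m+1) (by grind) pa
        obtain ⟨-, -, b, -⟩ := EO (n+1) m (by grind) pb
        refine evenStep _ _ _ _ _ _ _ _ _ (pos _ _ he (by omega)) a b ?_ (Rs n m (by grind))
        by_cases h0 : 1 ≤ n+m
        · exact (EE n m (by grind) h0 (IH n m (by omega) h0)).2.2
        · obtain ⟨rfl, rfl⟩ : n = 0 ∧ m = 0 := by omega
          simp [V10, H01, R00]
      · have hne : ¬ Even (n+m) := by grind
        have h0 : 1 ≤ n+m := by
          rcases Nat.eq_zero_or_pos (n+m) with h | h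
          · rw [h] at hne; simp at hne
          · exact h
        obtain ⟨a, -⟩ := EE n (m+1) (by grind) (by omega) pa
        obtain ⟨-, b, -⟩ := EE (n+1) m (by grind) (by omega) pb
        obtain ⟨-, -, -, c⟩ := EO n m hne (IH n m (by omega) h0)
        exact oddStep _ _ _ _ _ _ _ _ (pos n (m+1) (by grind) (by omega))
          (pos (n+1) m (by grind) (by omega)) a b c

/-- The discrete `Z^2` is an immersion. -/
theorem discrete_Z2_is_immersion (f : ℕ → ℕ → ℂ)
    (hq : CrossRatioEq' f) (hc : ConstraintC' 2 f)
    (h00 : f 0 0 = 0) (h10 : f 1 0 = 0) (h01 : f 0 1 = 0)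
    (h20 : f 2 0 = 1) (h02 : f 0 2 = -1)
    (h11 : f 1 1 = 2 * Complex.I / (Real.pi : ℂ)) :
    IsImmersion f := by
  obtain ⟨R, R00, pos, Rx, Ry, R11, Rx1, Ry1, Rs⟩ := exists_radii2
  have ax := axis_seq (fun n => f n 0) h00 h10 h20 (by
    intro n
    have := hc (n+1) 0
    simp at this
    linear_combination this)
  have ay := axis_seq (fun n => - f 0 n) (by simp [h00]) (by simp [h01]) (by simp [h02]) (by
    intro n
    have := hc 0 (n+1)
    simp at this
    linear_combination this)
  set H : ℕ → ℕ → ℂ := fun n m => f (n+1) m - f n m with hH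
  set V : ℕ → ℕ → ℂ := fun n m => f n (m+1) - f n m with hV
  have cl : ∀ n m, H n m + V (n+1) m = V n m + H n (m+1) := by
    intro n m; simp only [hH, hV]; ring
  have q : ∀ n m, H n m * H n (m+1) + V n m * V (n+1) m = 0 := by
    intro n m
    simp only [hH, hV]
    linear_combination - hq n m
  have f11 : f 1 1 = I * R 1 1 := by
    rw [h11, R11]; push_cast; ring
  have P0 := PP_all H V R R00 pos Rx Ry Rx1 Ry1 Rs cl q
    (by intro k; simp only [hH]; rw [(ax k).1, (ax k).2]; ring)
    (by
      intro k; simp only [hH]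
      have := (ax (k+1)).1
      rw [show 2*k+1+1 = 2*(k+1) by ring, this, (ax k).2]; push_cast; ring)
    (by intro k; simp only [hV]; linear_combination (ay k).1 - (ay k).2)
    (by
      intro k; simp only [hV]
      have a := (ay (k+1)).1
      have b := (ay k).2
      rw [show 2*k+1+1 = 2*(k+1) by ring]
      push_cast at a
      linear_combination b - a)
    (by simp only [hV]; simp [h10, f11]) (by simp only [hH]; simp [h01, f11])
  have P : ∀ n m, 1 ≤ n+m → PP H V R n m := fun n m h => P0 _ n m rfl h
  have cr : ∀ n m, 0 ≤ crs (H n m) (V n m) ∧ 0 ≤ crs (H n m) (V (n+1) m) ∧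
      0 ≤ crs (H n (m+1)) (V n m) ∧ 0 ≤ crs (H n (m+1)) (V (n+1) m) := by
    intro n m
    by_cases h0 : 1 ≤ n+m
    · by_cases he : Even (n+m)
      · obtain ⟨a, b, -⟩ := edgesE n m he h0 pos cl q (P n m h0)
        exact crossE _ _ _ _ _ _ (pos n m he h0) (pos (n+1) (m+1) (by grind) (by omega))
          ((P n m h0).2.2.1 he) a b
      · obtain ⟨a, b, -, c⟩ := edgesO n m he pos cl q (P n m h0)
        exact crossO _ _ _ _ _ _ (pos (n+1) m (by grind) (by omega))
          (pos n (m+1) (by grind) (by omega)) ((P n m h0).2.2.2 he) a b c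
    · obtain ⟨rfl, rfl⟩ : n = 0 ∧ m = 0 := by omega
      simp only [hH, hV, zero_add, h00, h10, h01, crs]
      simp
      linarith
  intro n m
  constructor
  · refine sep_line (f (n+1) m) (V (n+1) m) (P (n+1) m (by omega)).2.1 _ _ ?_ ?_
    · obtain ⟨-, c2, -, c4⟩ := cr n m
      simp only [hH, hV, crs, Complex.sub_re, Complex.sub_im] at c2 c4
      intro x hx
      simp only [quadVerts, Set.mem_insert_iff, Set.mem_singleton_iff] at hx
      rcases hx with rfl | rfl | rfl | rfl <;>
      simp only [hV, crs, Complex.sub_re, Complex.sub_im] <;> nlinarith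
    · obtain ⟨c1, -, c3, -⟩ := cr (n+1) m
      simp only [hH, hV, crs, Complex.sub_re, Complex.sub_im] at c1 c3
      intro x hx
      simp only [quadVerts, Set.mem_insert_iff, Set.mem_singleton_iff] at hx
      rcases hx with rfl | rfl | rfl | rfl <;>
      simp only [hV, crs, Complex.sub_re, Complex.sub_im] <;> nlinarith
  · refine (sep_line (f n (m+1)) (H n (m+1)) (P n (m+1) (by omega)).1 _ _ ?_ ?_).symm
    · obtain ⟨c1, c2, -, -⟩ := cr n (m+1)
      simp only [hH, hV, crs, Complex.sub_re, Complex.sub_im] at c1 c2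
      intro x hx
      simp only [quadVerts, Set.mem_insert_iff, Set.mem_singleton_iff] at hx
      rcases hx with rfl | rfl | rfl | rfl <;>
      simp only [hH, crs, Complex.sub_re, Complex.sub_im] <;> nlinarith
    · obtain ⟨-, -, c3, c4⟩ := cr n m
      simp only [hH, hV, crs, Complex.sub_re, Complex.sub_im] at c3 c4
      intro x hx
      simp only [quadVerts, Set.mem_insert_iff, Set.mem_singleton_iff] at hx
      rcases hx with rfl | rfl | rfl | rfl <;>
      simp only [hH, crs, Complex.sub_re, Complex.sub_im] <;> nlinarith

end
end

section
/- Let N, M be integers with M > |N|, and let a, b, c, d, e be positive real numbers (representing R(z), R(z+1), R(z+i), R(z−1), R(z−i) at z = N + iM). If (N+M)(a² − cd)(d + e) + (M−N)(a² − de)(c + d) = 0 (equation (Le) at z) and (N+M)(a² − be)(e + d) + (N−M)(a² − ed)(b + e) = 0 (equation (Dn) at z), then (a² − cd)(b + e) + (a² − be)(c + d) = 0, which is equivalent to equation (lnR) at z: a²(b + c + d + e) = (1/b + 1/c + 1/d + 1/e) · bcde. -/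
/-- Claim 3) of Lemma 4 (Appendix B): equations (Le) and (Dn) at `z = N + iM`
(with `M > |N|`) imply `(a² − cd)(b + e) + (a² − be)(c + d) = 0`, which is
equivalent to equation (lnR) at `z`: `a²(b+c+d+e) = (1/b+1/c+1/d+1/e)·bcde`.
Here `a, b, c, d, e` denote `R(z), R(z+1), R(z+i), R(z−1), R(z−i)`. -/
theorem Le_and_Dn_imply_lnR (N M : ℤ) (hNM : |N| < M)
    (a b c d e : ℝ) (ha : 0 < a) (hb : 0 < b) (hc : 0 < c) (hd : 0 < d) (he : 0 < e)
    (hLe : ((N + M : ℤ) : ℝ) * (a^2 - c*d) * (d + e) +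
           ((M - N : ℤ) : ℝ) * (a^2 - d*e) * (c + d) = 0)
    (hDn : ((N + M : ℤ) : ℝ) * (a^2 - b*e) * (e + d) +
           ((N - M : ℤ) : ℝ) * (a^2 - e*d) * (b + e) = 0) :
    ((a^2 - c*d) * (b + e) + (a^2 - b*e) * (c + d) = 0) ∧
    (a^2 * (b + c + d + e) = (1/b + 1/c + 1/d + 1/e) * (b*c*d*e)) := by
  have hpos : (0 : ℝ) < ((N + M : ℤ) : ℝ) := by
    have h := neg_abs_le N
    exact_mod_cast (by omega : 0 < N + M)
  have key : (a^2 - c*d) * (b + e) + (a^2 - b*e) * (c + d) = 0 := by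
    have hne : ((N + M : ℤ) : ℝ) * (d + e) ≠ 0 := by positivity
    apply (mul_eq_zero.mp _).resolve_left hne
    push_cast at hLe hDn ⊢
    linear_combination (b + e) * hLe + (c + d) * hDn
  refine ⟨key, ?_⟩
  have h2 : (1/b + 1/c + 1/d + 1/e) * (b*c*d*e) = c*d*e + b*d*e + b*c*e + b*c*d := by
    field_simp
    try ring
  rw [h2]
  linear_combination key
end
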